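/- arXiv:2207.12490 — 6 statements merged into one kernel-verified Lean document; each statement's English description precedes it below -/
import Mathlib

section
/- Let f ∈ K̄[x] be a nonzero polynomial, R its multiset of roots in K̄, 𝔰 ⊆ R a sub-multiset of even cardinality, and α ∈ K̄. Set d₊(𝔰,α) := min_{a ∈ 𝔰} v(a − α) and d₋(𝔰,α) := max_{a ∈ R∖𝔰} v(a − α) (with the conventions min ∅ = +∞ and max ∅ = −∞), and assume d₋(𝔰,α) < d₊(𝔰,α). Then for every rational b with d₋(𝔰,α) ≤ b ≤ d₊(𝔰,α) one has 𝔱^R(α,b) = min{𝔱^{𝔰}(α,b), 𝔱^{R∖𝔰}(α,b)}. -/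
open Polynomial

/-- The *Gauss valuation* of a polynomial: the minimum of the valuations of its
coefficients (with value `⊤ = +∞` for the zero polynomial). -/
noncomputable def gaussVal {Kbar : Type*} [Field Kbar]
    (v : AddValuation Kbar (WithTop ℚ)) (h : Kbar[X]) : WithTop ℚ :=
  h.support.inf fun i => v (h.coeff i)

/-- `h = q² + ρ` is a *part-square decomposition* of `h`:
`deg q ≤ ⌈deg h / 2⌉`, encoded as `2 * deg q ≤ deg h + 1` (`q = 0` is allowed). -/
def IsPSD {Kbar : Type*} [Field Kbar] (h q ρ : Kbar[X]) : Prop :=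
  h = q ^ 2 + ρ ∧ 2 * q.natDegree ≤ h.natDegree + 1

/-- A part-square decomposition `h = q² + ρ` is *good* if either `v ρ − v h ≥ 2 v 2`,
or `v ρ − v h < 2 v 2` and no part-square decomposition of `h` has strictly larger
Gauss valuation of its remainder. -/
def IsGoodPSD {Kbar : Type*} [Field Kbar] (v : AddValuation Kbar (WithTop ℚ))
    (h q ρ : Kbar[X]) : Prop :=
  IsPSD h q ρ ∧
    (gaussVal v h + (v 2 + v 2) ≤ gaussVal v ρ ∨
      (gaussVal v ρ < gaussVal v h + (v 2 + v 2) ∧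
        ∀ q' ρ' : Kbar[X], IsPSD h q' ρ' → gaussVal v ρ' ≤ gaussVal v ρ))

/-- The residue field of `v` is algebraically closed, encoded via integral lifts:
every monic polynomial of positive degree with integral coefficients has an integral
root modulo the maximal ideal. -/
def ResidueAlgClosed {Kbar : Type*} [Field Kbar]
    (v : AddValuation Kbar (WithTop ℚ)) : Prop :=
  ∀ p : Kbar[X], p.Monic → 0 < p.natDegree → (∀ i, 0 ≤ v (p.coeff i)) →
    ∃ x : Kbar, 0 ≤ v x ∧ 0 < v (p.eval x)

/-- The monic polynomial `h_S := ∏_{a ∈ S} (z − a)` attached to a finite multiset `S`. -/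
noncomputable def rootsPoly {Kbar : Type*} [Field Kbar] (S : Multiset Kbar) : Kbar[X] :=
  (S.map fun a => X - C a).prod

/-- `TVal v S α b t` expresses that `𝔱^S(α, b) = t`, i.e. (for some, equivalently any,
`β ∈ K̄ˣ` with `v β = b`) that
`t = min (2v(2), sup { v ρ − v (h_S(βz+α)) : h_S(βz+α) = q² + ρ part-square dec. })`;
the subtraction is avoided by adding `v (h_S(βz+α))` throughout and the truncated
supremum is expressed via `IsLUB`. -/
def TVal {Kbar : Type*} [Field Kbar] (v : AddValuation Kbar (WithTop ℚ))
    (S : Multiset Kbar) (α : Kbar) (b t : ℚ) : Prop :=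
  ∃ β : Kbar, β ≠ 0 ∧ v β = (b : WithTop ℚ) ∧
    IsLUB {u : WithTop ℚ |
        ∃ q ρ : Kbar[X], IsPSD ((rootsPoly S).comp (C β * X + C α)) q ρ ∧
          u = min (gaussVal v ((rootsPoly S).comp (C β * X + C α)) + (v 2 + v 2))
                (gaussVal v ρ)}
      (gaussVal v ((rootsPoly S).comp (C β * X + C α)) + (t : WithTop ℚ))


section helpers
variable {F : Type*} [Field F] (v : AddValuation F (WithTop ℚ))

theorem wt_lt_add_left {r x y : WithTop ℚ} (hr : r ≠ ⊤) (hx : 0 < x) (hy : r ≤ y) :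
    r < x + y := by
  lift r to ℚ using hr
  induction x using WithTop.recTopCoe with
  | top => simp
  | coe x =>
    induction y using WithTop.recTopCoe with
    | top => simp
    | coe y => norm_cast at *; linarith

theorem wt_lt_add_right {r x y : WithTop ℚ} (hx : 0 ≤ x) (hy : r < y) :
    r < x + y := by
  have hr : r ≠ ⊤ := ne_top_of_lt hy
  lift r to ℚ using hr
  induction x using WithTop.recTopCoe with
  | top => simp
  | coe x =>
    induction y using WithTop.recTopCoe with
    | top => simp
    | coe y => norm_cast at *; linarith

theorem le_gaussVal {c : WithTop ℚ} {p : F[X]} :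
    c ≤ gaussVal v p ↔ ∀ i, c ≤ v (p.coeff i) := by
  unfold gaussVal
  rw [Finset.le_inf_iff]
  refine ⟨fun h i => ?_, fun h i _ => h i⟩
  by_cases hi : i ∈ p.support
  · exact h i hi
  · rw [Polynomial.notMem_support_iff.mp hi]; simp

theorem gaussVal_le (p : F[X]) (i : ℕ) : gaussVal v p ≤ v (p.coeff i) :=
  (le_gaussVal v).mp le_rfl i

theorem gaussVal_zero : gaussVal v (0 : F[X]) = ⊤ := by simp [gaussVal]

theorem gaussVal_attained {p : F[X]} (hp : p ≠ 0) : ∃ i, v (p.coeff i) = gaussVal v p := by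
  obtain ⟨i, _, hi⟩ := Finset.exists_mem_eq_inf p.support
    (Polynomial.support_nonempty.mpr hp) (fun i => v (p.coeff i))
  exact ⟨i, hi.symm⟩

theorem v_ne_top {x : F} (hx : x ≠ 0) : v x ≠ ⊤ := (AddValuation.ne_top_iff v).mpr hx

theorem gaussVal_ne_top {p : F[X]} (hp : p ≠ 0) : gaussVal v p ≠ ⊤ := by
  intro h
  apply hp
  ext i
  have := gaussVal_le v p i
  rw [h, top_le_iff, AddValuation.top_iff] at this
  simpa using this

theorem gaussVal_add (p q : F[X]) : min (gaussVal v p) (gaussVal v q) ≤ gaussVal v (p + q) := by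
  rw [le_gaussVal]
  intro i
  rw [coeff_add]
  exact le_trans (min_le_min (gaussVal_le v p i) (gaussVal_le v q i)) (v.map_add _ _)

theorem gaussVal_neg (p : F[X]) : gaussVal v (-p) = gaussVal v p := by
  apply le_antisymm <;> rw [le_gaussVal] <;> intro i
  · simpa using gaussVal_le v (-p) i
  · simpa using gaussVal_le v p i

theorem lt_v_sum {ι : Type*} {c : WithTop ℚ} (hc : c ≠ ⊤) (s : Finset ι) (g : ι → F)
    (h : ∀ i ∈ s, c < v (g i)) : c < v (∑ i ∈ s, g i) :=
  AddValuation.map_lt_sum' v (lt_top_iff_ne_top.mpr hc) h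

theorem coeff_dom {c : WithTop ℚ} (hc : c ≠ ⊤) (p q : F[X]) (i0 j0 : ℕ)
    (h : ∀ i j, i + j = i0 + j0 → i ≠ i0 → c < v (p.coeff i) + v (q.coeff j)) :
    ∃ e, c < v e ∧ (p * q).coeff (i0 + j0) = p.coeff i0 * q.coeff j0 + e := by
  classical
  refine ⟨∑ x ∈ (Finset.HasAntidiagonal.antidiagonal (i0 + j0)).erase (i0, j0), p.coeff x.1 * q.coeff x.2, ?_, ?_⟩
  · apply lt_v_sum v hc
    rintro ⟨i, j⟩ hx
    rw [Finset.mem_erase, Finset.HasAntidiagonal.mem_antidiagonal] at hx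
    rw [AddValuation.map_mul]
    apply h i j hx.2
    rintro rfl
    apply hx.1
    have : j = j0 := by simpa using hx.2
    rw [this]
  · rw [coeff_mul, ← Finset.add_sum_erase _ _ (a := (i0, j0)) (by simp)]

theorem v_add_dom {c : WithTop ℚ} {x e : F} (hx : v x = c) (he : c < v e) : v (x + e) = c := by
  rw [← hx] at he ⊢
  rw [add_comm]; exact AddValuation.map_add_eq_of_lt_right v he

theorem gaussVal_mul_ge (p q : F[X]) : gaussVal v p + gaussVal v q ≤ gaussVal v (p * q) := by
  rw [le_gaussVal]
  intro n
  rw [coeff_mul]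
  apply AddValuation.map_le_sum
  intro x _
  rw [AddValuation.map_mul]
  exact add_le_add (gaussVal_le v p _) (gaussVal_le v q _)

theorem gaussVal_first {p : F[X]} (hp : p ≠ 0) : ∃ i, v (p.coeff i) = gaussVal v p ∧
    ∀ j < i, gaussVal v p < v (p.coeff j) := by
  classical
  refine ⟨Nat.find (gaussVal_attained v hp), Nat.find_spec (gaussVal_attained v hp), ?_⟩
  intro j hj
  exact lt_of_le_of_ne (gaussVal_le v p j) (Ne.symm (Nat.find_min _ hj))

theorem gaussVal_last {p : F[X]} (hp : p ≠ 0) : ∃ i, v (p.coeff i) = gaussVal v p ∧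
    ∀ j, i < j → gaussVal v p < v (p.coeff j) := by
  classical
  obtain ⟨i0, hi0⟩ := gaussVal_attained v hp
  have hb : ∀ j, v (p.coeff j) = gaussVal v p → j ≤ p.natDegree := by
    intro j hj
    apply le_natDegree_of_ne_zero
    intro h0
    rw [h0, AddValuation.map_zero] at hj
    exact gaussVal_ne_top v hp hj.symm
  refine ⟨Nat.findGreatest (fun i => v (p.coeff i) = gaussVal v p) p.natDegree,
    Nat.findGreatest_spec (P := fun i => v (p.coeff i) = gaussVal v p) (hb i0 hi0) hi0, ?_⟩
  intro j hj
  refine lt_of_le_of_ne (gaussVal_le v p j) (fun h => ?_)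
  exact absurd (Nat.le_findGreatest (P := fun i => v (p.coeff i) = gaussVal v p)
    (hb j h.symm) h.symm) (not_le.mpr hj)

theorem gaussVal_mul (p q : F[X]) : gaussVal v (p * q) = gaussVal v p + gaussVal v q := by
  by_cases hp : p = 0
  · simp [hp, gaussVal_zero]
  by_cases hq : q = 0
  · simp [hq, gaussVal_zero]
  apply le_antisymm _ (gaussVal_mul_ge v p q)
  obtain ⟨i, hi, hi'⟩ := gaussVal_first v hp
  obtain ⟨j, hj, hj'⟩ := gaussVal_first v hq
  have hpt := gaussVal_ne_top v hp
  have hqt := gaussVal_ne_top v hq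
  obtain ⟨e, he, hc⟩ := coeff_dom v (c := gaussVal v p + gaussVal v q)
    (WithTop.add_ne_top.mpr ⟨hpt, hqt⟩) p q i j (by
      intro a b hab hne
      rcases lt_or_gt_of_ne hne with h | h
      · exact WithTop.add_lt_add_of_lt_of_le hqt (hi' a h) (gaussVal_le v q b)
      · exact WithTop.add_lt_add_of_le_of_lt hpt (gaussVal_le v p a) (hj' b (by omega)))
  refine le_trans (gaussVal_le v _ (i + j)) ?_
  rw [hc, v_add_dom v _ he]
  rw [AddValuation.map_mul, hi, hj]

theorem sq_odd_coeff (s : F[X]) (k : ℕ) : (s ^ 2).coeff (2 * k + 1) =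
    2 * ∑ a ∈ Finset.range (k + 1), s.coeff a * s.coeff (2 * k + 1 - a) := by
  rw [sq, coeff_mul, Finset.Nat.sum_antidiagonal_eq_sum_range_succ_mk]
  simp only
  rw [show (2 * k + 1).succ = (k + 1) + (k + 1) by omega, Finset.sum_range_add, two_mul (Finset.sum _ _)]
  congr 1
  rw [← Finset.sum_range_reflect (fun a => s.coeff a * s.coeff (2 * k + 1 - a))]
  apply Finset.sum_congr rfl
  intro a ha
  rw [Finset.mem_range] at ha
  rw [mul_comm]
  congr 2 <;> omega

theorem sq_odd_val (s : F[X]) (i : ℕ) (hi : Odd i) :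
    v 2 + (gaussVal v s + gaussVal v s) ≤ v ((s ^ 2).coeff i) := by
  obtain ⟨k, rfl⟩ := hi
  rw [sq_odd_coeff, AddValuation.map_mul]
  gcongr
  apply AddValuation.map_le_sum
  intro x _
  rw [AddValuation.map_mul]
  exact add_le_add (gaussVal_le v s _) (gaussVal_le v s _)

/-- representation `g = a² + X b²`. -/
theorem exists_norm_form [IsAlgClosed F] (g : F[X]) : ∃ a b : F[X], g = a ^ 2 + X * b ^ 2 := by
  have key : ∀ S : Multiset F, ∃ a b : F[X], (S.map fun c => X - C c).prod = a ^ 2 + X * b ^ 2 := by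
    intro S
    induction S using Multiset.induction_on with
    | empty => exact ⟨1, 0, by simp⟩
    | cons c S ih =>
      obtain ⟨a, b, hab⟩ := ih
      obtain ⟨s, hs⟩ := IsAlgClosed.exists_pow_nat_eq (-c) (n := 2) (by norm_num)
      refine ⟨C s * a - X * b, C s * b + a, ?_⟩
      rw [Multiset.map_cons, Multiset.prod_cons, hab]
      have : (C c : F[X]) = - C s ^ 2 := by rw [← C_pow, hs]; simp
      rw [this]; ring
  obtain ⟨a, b, hab⟩ := key g.roots
  obtain ⟨l, hl⟩ := IsAlgClosed.exists_pow_nat_eq g.leadingCoeff (n := 2) (by norm_num)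
  refine ⟨C l * a, C l * b, ?_⟩
  have h := (IsAlgClosed.splits g).eq_prod_roots
  rw [h, hab, ← hl, C_pow]; ring

theorem norm_form_deg (a b : F[X]) :
    2 * a.natDegree ≤ (a ^ 2 + X * b ^ 2).natDegree ∧
      (b = 0 ∨ 2 * b.natDegree + 1 ≤ (a ^ 2 + X * b ^ 2).natDegree) := by
  by_cases hb : b = 0
  · simp [hb]
  have hXb : (X * b ^ 2).natDegree = 2 * b.natDegree + 1 := by
    rw [natDegree_X_mul (pow_ne_zero 2 hb), natDegree_pow]
  have ha : (a ^ 2).natDegree = 2 * a.natDegree := natDegree_pow a 2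
  rcases lt_or_ge (a ^ 2).natDegree (X * b ^ 2).natDegree with h | h
  · rw [natDegree_add_eq_right_of_natDegree_lt h]; omega
  · have h' : (X * b ^ 2).natDegree < (a ^ 2).natDegree := by omega
    rw [natDegree_add_eq_left_of_natDegree_lt h']; omega

/-- totally odd decompositions exist -/
theorem exists_totally_odd [IsAlgClosed F] (h : F[X]) : ∃ q ρ : F[X], IsPSD h q ρ ∧
    ∀ i, Even i → ρ.coeff i = 0 := by
  classical
  obtain ⟨g, hg⟩ : ∃ g : F[X], ∀ i, g.coeff i = h.coeff (2 * i) := by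
    refine ⟨contract 2 h, fun i => ?_⟩
    rw [coeff_contract (by norm_num), mul_comm]
  obtain ⟨a, b, hab⟩ := exists_norm_form g
  have hgd : 2 * g.natDegree ≤ h.natDegree := by
    by_cases h0 : g = 0
    · simp [h0]
    · apply le_natDegree_of_ne_zero
      rw [← hg]
      simpa using h0
  obtain ⟨hda, hdb⟩ := norm_form_deg a b
  rw [← hab] at hda hdb
  set q := expand F 2 a + X * expand F 2 b with hq
  refine ⟨q, h - q ^ 2, ⟨by ring, ?_⟩, ?_⟩
  · have : q.natDegree ≤ g.natDegree := by
      refine (natDegree_add_le _ _).trans (max_le ?_ ?_)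
      · rw [natDegree_expand]; omega
      · rcases hdb with rfl | hdb
        · simp
        · refine natDegree_mul_le.trans ?_
          rw [natDegree_expand, natDegree_X]; omega
    omega
  · rintro i ⟨k, rfl⟩
    have e : q ^ 2 = expand F 2 g + X * expand F 2 (2 * a * b) := by
      rw [hab]; simp only [map_add, map_mul, map_pow, expand_X, hq, map_ofNat]; ring
    rw [coeff_sub, e, coeff_add, ← two_mul, mul_comm 2 k, coeff_expand_mul (by norm_num), hg]
    have : (X * expand F 2 (2 * a * b)).coeff (k * 2) = 0 := by
      rcases k with _ | k
      · simp
      · rw [show (k + 1) * 2 = (k * 2 + 1) + 1 by ring, coeff_X_mul, coeff_expand (by norm_num),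
          if_neg (by omega)]
    rw [this, mul_comm 2 k]; simp

theorem lt_gaussVal_add {c : WithTop ℚ} {p q : F[X]} (hp : c < gaussVal v p)
    (hq : c < gaussVal v q) : c < gaussVal v (p + q) :=
  lt_of_lt_of_le (lt_min hp hq) (gaussVal_add v p q)

theorem gaussVal_sub (p q : F[X]) : min (gaussVal v p) (gaussVal v q) ≤ gaussVal v (p - q) := by
  rw [sub_eq_add_neg, ← gaussVal_neg v q]
  exact gaussVal_add v p (-q)

theorem lt_gaussVal_sub {c : WithTop ℚ} {p q : F[X]} (hp : c < gaussVal v p)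
    (hq : c < gaussVal v q) : c < gaussVal v (p - q) :=
  lt_of_lt_of_le (lt_min hp hq) (gaussVal_sub v p q)

theorem gaussVal_C (c : F) : gaussVal v (C c) = v c := by
  apply le_antisymm
  · simpa using gaussVal_le v (C c) 0
  · rw [le_gaussVal]
    intro i
    rw [coeff_C]
    split_ifs <;> simp

theorem odd_ge (hv2 : 0 < v 2) {H q ρ : F[X]} (h : H = q ^ 2 + ρ) (i : ℕ) (hoddi : Odd i)
    (hi : v (ρ.coeff i) ≤ gaussVal v ρ) : gaussVal v H ≤ gaussVal v ρ := by
  by_contra hcon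
  rw [not_le] at hcon
  have hq2 : q ^ 2 = H - ρ := by rw [h]; ring
  have h1 : gaussVal v ρ ≤ gaussVal v q + gaussVal v q := by
    rw [← gaussVal_mul, ← sq, hq2]
    exact le_trans (le_min hcon.le le_rfl) (gaussVal_sub v H ρ)
  have h2 := wt_lt_add_left (ne_top_of_lt hcon) hv2 h1
  have h3 : gaussVal v ρ < v ((q ^ 2).coeff i) := lt_of_lt_of_le h2 (sq_odd_val v q i hoddi)
  have h4 : gaussVal v ρ < v (H.coeff i) := lt_of_lt_of_le hcon (gaussVal_le v H i)
  have h5 : ρ.coeff i = H.coeff i - (q ^ 2).coeff i := by rw [h]; simp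
  have h6 := lt_of_lt_of_le (lt_min h4 h3) (v.map_sub _ _)
  rw [← h5] at h6
  exact absurd hi (not_le.mpr h6)

theorem wt_arith1 {g r a y w : WithTop ℚ} (hg : g ≤ y + y) (hw : r ≤ w + w)
    (hr : r < g + (a + a)) : r < a + (y + w) := by
  have hrt : r ≠ ⊤ := ne_top_of_lt hr
  lift r to ℚ using hrt
  induction a using WithTop.recTopCoe with
  | top => simp
  | coe a =>
    induction y using WithTop.recTopCoe with
    | top => simp
    | coe y =>
      induction w using WithTop.recTopCoe with
      | top => simp
      | coe w =>
        have hgt : g ≠ ⊤ := ne_top_of_le_ne_top (by simp) hg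
        lift g to ℚ using hgt
        norm_cast at *; linarith

theorem wt_arith2 {g r a y w : WithTop ℚ} (hg : g ≤ y + y) (hw : w + w < r)
    (hr : r < g + (a + a)) : w + w < a + (y + w) := by
  have hrt : r ≠ ⊤ := ne_top_of_lt hr
  have hwt : w + w ≠ ⊤ := ne_top_of_lt hw
  lift r to ℚ using hrt
  have hwt : w ≠ ⊤ := by intro h; simp [h] at hw
  lift w to ℚ using hwt
  induction a using WithTop.recTopCoe with
  | top => simp
  | coe a =>
    induction y using WithTop.recTopCoe with
    | top => simp
    | coe y =>
      have hgt : g ≠ ⊤ := ne_top_of_le_ne_top (by simp) hg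
      lift g to ℚ using hgt
      norm_cast at *; linarith

theorem good_max (hv2 : 0 < v 2) {H q ρ q' ρ' : F[X]}
    (h : H = q ^ 2 + ρ) (h' : H = q' ^ 2 + ρ')
    (hlt : gaussVal v ρ < gaussVal v H + (v 2 + v 2)) (i : ℕ) (hoddi : Odd i)
    (hi : v (ρ.coeff i) ≤ gaussVal v ρ) : gaussVal v ρ' ≤ gaussVal v ρ := by
  by_contra hcon
  rw [not_le] at hcon
  have hge := odd_ge v hv2 h i hoddi hi
  have hq2 : q ^ 2 = H - ρ := by rw [h]; ring
  have hq : gaussVal v H ≤ gaussVal v q + gaussVal v q := by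
    rw [← gaussVal_mul, ← sq, hq2]
    exact le_trans (le_min le_rfl hge) (gaussVal_sub v H ρ)
  set s := q' - q with hs
  have hρ : ρ = s ^ 2 + (C 2 * (q * s) + ρ') := by
    have : (C 2 : F[X]) = 2 := map_ofNat C 2
    rw [this, hs]
    linear_combination h' - h
  have h2 : gaussVal v (C 2 * (q * s)) = v 2 + (gaussVal v q + gaussVal v s) := by
    rw [gaussVal_mul, gaussVal_mul, gaussVal_C]
  rcases le_or_gt (gaussVal v ρ) (gaussVal v s + gaussVal v s) with hw | hw
  · have h3 : gaussVal v ρ < gaussVal v (C 2 * (q * s) + ρ') :=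
      lt_gaussVal_add v (by rw [h2]; exact wt_arith1 hq hw hlt) hcon
    have h4 : gaussVal v ρ < v ((s ^ 2).coeff i) :=
      lt_of_lt_of_le (wt_lt_add_left (ne_top_of_lt hlt) hv2 hw) (sq_odd_val v s i hoddi)
    have h5 := v.map_lt_add h4 (lt_of_lt_of_le h3 (gaussVal_le v _ i))
    rw [← coeff_add, ← hρ] at h5
    exact absurd hi (not_le.mpr h5)
  · have h3 : gaussVal v s + gaussVal v s < gaussVal v (C 2 * (q * s) + ρ') :=
      lt_gaussVal_add v (by rw [h2]; exact wt_arith2 hq hw hlt) (hw.trans hcon)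
    have h4 := lt_gaussVal_sub v hw h3
    have h5 : ρ - (C 2 * (q * s) + ρ') = s * s := by
      conv_lhs => rw [hρ]
      ring
    rw [h5, gaussVal_mul] at h4
    exact lt_irrefl _ h4

/-- sufficient condition for goodness -/
def GoodCond (H ρ : F[X]) : Prop :=
  gaussVal v H + (v 2 + v 2) ≤ gaussVal v ρ ∨ ∃ i, Odd i ∧ v (ρ.coeff i) ≤ gaussVal v ρ

/-- polynomial version of `TVal` -/
def PolyT (H : F[X]) (t : ℚ) : Prop :=
  IsLUB {u : WithTop ℚ | ∃ q ρ : F[X], IsPSD H q ρ ∧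
    u = min (gaussVal v H + (v 2 + v 2)) (gaussVal v ρ)} (gaussVal v H + (t : WithTop ℚ))

theorem polyT_eq (hv2 : 0 < v 2) {H q ρ : F[X]} (h : IsPSD H q ρ) (hc : GoodCond v H ρ)
    {t : ℚ} (ht : PolyT v H t) :
    gaussVal v H + (t : WithTop ℚ) = min (gaussVal v H + (v 2 + v 2)) (gaussVal v ρ) := by
  refine IsLUB.unique ht (IsGreatest.isLUB ⟨⟨q, ρ, h, rfl⟩, ?_⟩)
  rintro u ⟨q', ρ', h', rfl⟩
  refine le_min (min_le_left _ _) ?_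
  rcases le_or_gt (gaussVal v H + (v 2 + v 2)) (gaussVal v ρ) with hl | hl
  · exact (min_le_left _ _).trans hl
  · rcases hc with hc | ⟨i, hoddi, hi⟩
    · exact absurd hc (not_le.mpr hl)
    · exact (min_le_right _ _).trans (good_max v hv2 h.1 h'.1 hl i hoddi hi)

theorem polyT_zero (hv2 : v 2 = 0) {H : F[X]} (hH : H ≠ 0) {t : ℚ} (ht : PolyT v H t) : t = 0 := by
  have hg : gaussVal v H + (t : WithTop ℚ) = gaussVal v H := by
    refine IsLUB.unique ht (IsGreatest.isLUB ⟨⟨0, H, ⟨by simp, by simp⟩, by simp [hv2]⟩, ?_⟩)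
    rintro u ⟨q', ρ', h', rfl⟩
    refine (min_le_left _ _).trans (by simp [hv2])
  have hgt := gaussVal_ne_top v hH
  lift gaussVal v H to ℚ using hgt with g
  norm_cast at hg
  linarith

theorem totally_odd_good {H ρ : F[X]} (ho : ∀ i, Even i → ρ.coeff i = 0) : GoodCond v H ρ := by
  by_cases h0 : ρ = 0
  · left; rw [h0, gaussVal_zero]; exact le_top
  · right
    obtain ⟨i, hi⟩ := gaussVal_attained v h0
    refine ⟨i, ?_, hi.le⟩
    rw [← Nat.not_even_iff_odd]
    intro he
    rw [ho i he, AddValuation.map_zero] at hi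
    exact gaussVal_ne_top v h0 hi.symm

theorem v_tr (c u : F) (hu : v u = 0) (p : F[X]) (i : ℕ) :
    v ((C c * p.comp (C u * X)).coeff i) = v c + v (p.coeff i) := by
  rw [coeff_C_mul, comp_C_mul_X_coeff, v.map_mul, v.map_mul, v.map_pow, hu]
  simp

theorem gaussVal_tr (c u : F) (hu : v u = 0) (p : F[X]) :
    gaussVal v (C c * p.comp (C u * X)) = v c + gaussVal v p := by
  rw [gaussVal_mul, gaussVal_C]
  congr 1
  have h := v_tr v 1 u hu p
  simp only [map_one, one_mul, AddValuation.map_one, zero_add] at h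
  apply le_antisymm <;> rw [le_gaussVal] <;> intro i
  · rw [← h]; exact gaussVal_le v _ i
  · rw [h]; exact gaussVal_le v _ i

theorem transport [IsAlgClosed F] (hv2 : 0 < v 2) {H q ρ : F[X]} (h : IsPSD H q ρ)
    (hc : GoodCond v H ρ) (hH : gaussVal v H = 0) (c u : F) (hc0 : c ≠ 0) (hu : v u = 0)
    {t : ℚ} (ht : PolyT v (C c * H.comp (C u * X)) t) :
    (t : WithTop ℚ) = min (v 2 + v 2) (gaussVal v ρ) := by
  have hu0 : u ≠ 0 := by rintro rfl; simp at hu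
  obtain ⟨d, hd⟩ := IsAlgClosed.exists_pow_nat_eq c (n := 2) (by norm_num)
  have hd0 : d ≠ 0 := by rintro rfl; apply hc0; rw [← hd]; simp
  have hdeg : ∀ (e : F) (p : F[X]), e ≠ 0 → (C e * p.comp (C u * X)).natDegree = p.natDegree := by
    intro e p he
    rw [natDegree_C_mul he, natDegree_comp, natDegree_C_mul_X _ hu0, mul_one]
  have hP : IsPSD (C c * H.comp (C u * X)) (C d * q.comp (C u * X)) (C c * ρ.comp (C u * X)) := by
    refine ⟨?_, ?_⟩
    · conv_lhs => rw [h.1]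
      rw [add_comp, pow_comp, ← hd, C_pow]; ring
    · rw [hdeg _ _ hd0, hdeg _ _ hc0]; exact h.2
  have hG : GoodCond v (C c * H.comp (C u * X)) (C c * ρ.comp (C u * X)) := by
    unfold GoodCond
    rw [gaussVal_tr v c u hu, gaussVal_tr v c u hu, add_assoc]
    rcases hc with hc | ⟨i, hoddi, hi⟩
    · left; gcongr
    · right
      refine ⟨i, hoddi, ?_⟩
      rw [v_tr v c u hu]; gcongr
  have := polyT_eq v hv2 hP hG ht
  rw [gaussVal_tr v c u hu, gaussVal_tr v c u hu, hH, add_zero, min_add_add_left] at this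
  exact (WithTop.add_left_inj (v_ne_top v hc0)).mp this

theorem core (hv2 : 0 < v 2) {m : ℕ} {H1 H2 q1 ρ1 q2 ρ2 : F[X]}
    (hmon : H1.Monic) (hdeg : H1.natDegree = 2 * m)
    (hH1 : gaussVal v H1 = 0) (hH2 : gaussVal v H2 = 0) (hH20 : H2.coeff 0 = 1)
    (hAB : (∀ i < 2 * m, 0 < v (H1.coeff i)) ∨ (∀ i, 0 < i → 0 < v (H2.coeff i)))
    (hp1 : IsPSD H1 q1 ρ1) (ho1 : ∀ i, Even i → ρ1.coeff i = 0)
    (hp2 : IsPSD H2 q2 ρ2) (ho2 : ∀ i, Even i → ρ2.coeff i = 0) :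
    ∃ q ρ, IsPSD (H1 * H2) q ρ ∧ GoodCond v (H1 * H2) ρ ∧
      min (v 2 + v 2) (gaussVal v ρ) =
        min (min (v 2 + v 2) (gaussVal v ρ1)) (min (v 2 + v 2) (gaussVal v ρ2)) := by
  have hnn : ∀ {H q ρ : F[X]}, IsPSD H q ρ → (∀ i, Even i → ρ.coeff i = 0) →
      gaussVal v H = 0 → 0 ≤ gaussVal v ρ ∧ 0 ≤ gaussVal v (q ^ 2) := by
    intro H q ρ hp ho hH
    have h1 : 0 ≤ gaussVal v ρ := by
      by_cases h0 : ρ = 0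
      · rw [h0, gaussVal_zero]; exact le_top
      rcases totally_odd_good v (H := H) ho with h | ⟨i, hoddi, hi⟩
      · refine le_trans ?_ h
        rw [hH, zero_add]; exact add_nonneg hv2.le hv2.le
      · rw [← hH]; exact odd_ge v hv2 hp.1 i hoddi hi
    refine ⟨h1, ?_⟩
    have : q ^ 2 = H - ρ := by rw [hp.1]; ring
    rw [this]
    exact le_trans (le_min hH.ge h1) (gaussVal_sub v H ρ)
  obtain ⟨hr1, hq1⟩ := hnn hp1 ho1 hH1
  obtain ⟨hr2, hq2⟩ := hnn hp2 ho2 hH2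
  have hd1 : q1.natDegree ≤ m := by have := hp1.2; omega
  have hq1d : (q1 ^ 2).natDegree ≤ 2 * m := by rw [natDegree_pow]; omega
  have hρ1d : ∀ n, 2 * m ≤ n → ρ1.coeff n = 0 := by
    intro n hn
    rcases hn.eq_or_lt with rfl | hn
    · exact ho1 _ (even_two_mul m)
    · have : ρ1 = H1 - q1 ^ 2 := by conv_rhs => rw [hp1.1]
                                    ring
      rw [this, coeff_sub, coeff_eq_zero_of_natDegree_lt (by omega),
        coeff_eq_zero_of_natDegree_lt (by omega), sub_zero]
  have hq1top : (q1 ^ 2).coeff (2 * m) = 1 := by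
    have h1 : H1.coeff (2 * m) = 1 := by rw [← hdeg]; exact hmon
    rw [hp1.1, coeff_add, hρ1d _ le_rfl, add_zero] at h1
    exact h1
  have hq20 : (q2 ^ 2).coeff 0 = 1 := by
    rw [hp2.1, coeff_add, ho2 0 (by simp), add_zero] at hH20
    exact hH20
  set ρ := q1 ^ 2 * ρ2 + H2 * ρ1 with hρ
  have hρ' : ρ = H1 * ρ2 + q2 ^ 2 * ρ1 := by
    rw [hρ]; linear_combination (-ρ2) * hp1.1 + ρ1 * hp2.1
  have hge : min (gaussVal v ρ1) (gaussVal v ρ2) ≤ gaussVal v ρ := by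
    refine le_trans (le_min ?_ ?_) (gaussVal_add v _ _)
    · rw [gaussVal_mul]; exact (min_le_right _ _).trans (le_add_of_nonneg_left hq1)
    · rw [gaussVal_mul, hH2, zero_add]; exact min_le_left _ _
  have hpsd : IsPSD (H1 * H2) (q1 * q2) ρ := by
    refine ⟨?_, ?_⟩
    · rw [hρ]; linear_combination H2 * hp1.1 + q1 ^ 2 * hp2.1
    · have h0 : H2 ≠ 0 := by rintro rfl; simp at hH20
      rw [hmon.natDegree_mul' h0, hdeg]
      have := natDegree_mul_le (p := q1) (q := q2)
      have := hp2.2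
      omega
  have hodd : ∀ {r : F[X]} {j : ℕ}, (∀ i, Even i → r.coeff i = 0) → r ≠ 0 →
      v (r.coeff j) = gaussVal v r → Odd j := by
    intro r j ho h0 hj
    rw [← Nat.not_even_iff_odd]
    intro he
    rw [ho j he, AddValuation.map_zero] at hj
    exact gaussVal_ne_top v h0 hj.symm
  have hne : ∀ {r : F[X]}, gaussVal v r ≠ ⊤ → r ≠ 0 := by
    rintro r h rfl; exact h (gaussVal_zero v)
  refine ⟨q1 * q2, ρ, hpsd, ?_⟩
  rw [← inf_inf_distrib_left]
  rcases le_or_gt (v 2 + v 2) (min (gaussVal v ρ1) (gaussVal v ρ2)) with hbig | hsmall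
  · refine ⟨Or.inl ?_, ?_⟩
    · rw [gaussVal_mul, hH1, hH2, zero_add, zero_add]; exact hbig.trans hge
    · rw [min_eq_left hbig, min_eq_left (hbig.trans hge)]
  -- the main point: an odd coefficient of small valuation
  have key : ∃ i, Odd i ∧ v (ρ.coeff i) = min (gaussVal v ρ1) (gaussVal v ρ2) := by
    rcases hAB with hA | hB
    · rcases le_or_gt (gaussVal v ρ1) (gaussVal v ρ2) with h12 | h12
      · rw [min_eq_left h12] at hsmall ⊢
        have hrt := ne_top_of_lt hsmall
        have h0 := hne hrt
        obtain ⟨j, hj, hj'⟩ := gaussVal_first v h0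
        have hjm : j < 2 * m := by
          by_contra hcon
          rw [hρ1d j (not_lt.mp hcon), AddValuation.map_zero] at hj
          exact hrt hj.symm
        refine ⟨j, hodd ho1 h0 hj, ?_⟩
        obtain ⟨e, he, hec⟩ := coeff_dom v hrt (q2 ^ 2) ρ1 0 j (by
          intro i k hik hi
          exact wt_lt_add_right (hq2.trans (gaussVal_le v _ i)) (hj' k (by omega)))
        have he2 : gaussVal v ρ1 < v ((H1 * ρ2).coeff j) := by
          rw [coeff_mul]
          apply lt_v_sum v hrt
          rintro ⟨i, k⟩ hik
          rw [Finset.HasAntidiagonal.mem_antidiagonal] at hik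
          rw [v.map_mul]
          exact wt_lt_add_left hrt (hA i (by simp at hik; omega)) (h12.trans (gaussVal_le v ρ2 k))
        rw [zero_add, hq20, one_mul] at hec
        rw [hρ', coeff_add, hec, add_comm, add_assoc]
        exact v_add_dom v hj (v.map_lt_add he he2)
      · rw [min_eq_right h12.le] at hsmall ⊢
        have hrt := ne_top_of_lt hsmall
        have h0 := hne hrt
        obtain ⟨j, hj, hj'⟩ := gaussVal_first v h0
        refine ⟨2 * m + j, (even_two_mul m).add_odd (hodd ho2 h0 hj), ?_⟩
        obtain ⟨e, he, hec⟩ := coeff_dom v hrt H1 ρ2 (2 * m) j (by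
          intro i k hik hi
          rcases lt_or_gt_of_ne hi with hi | hi
          · exact wt_lt_add_left hrt (hA i hi) (gaussVal_le v ρ2 k)
          · rw [coeff_eq_zero_of_natDegree_lt (by omega), v.map_zero, top_add]
            exact lt_top_iff_ne_top.mpr hrt)
        have h1 : H1.coeff (2 * m) = 1 := by rw [← hdeg]; exact hmon
        rw [h1, one_mul] at hec
        have he2 : gaussVal v ρ2 < v ((q2 ^ 2 * ρ1).coeff (2 * m + j)) := by
          refine lt_of_lt_of_le ?_ (gaussVal_le v _ _)
          rw [gaussVal_mul]
          exact wt_lt_add_right hq2 h12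
        rw [hρ', coeff_add, hec, add_assoc]
        exact v_add_dom v hj (v.map_lt_add he he2)
    · rcases le_or_gt (gaussVal v ρ2) (gaussVal v ρ1) with h12 | h12
      · rw [min_eq_right h12] at hsmall ⊢
        have hrt := ne_top_of_lt hsmall
        have h0 := hne hrt
        obtain ⟨j, hj, hj'⟩ := gaussVal_last v h0
        refine ⟨2 * m + j, (even_two_mul m).add_odd (hodd ho2 h0 hj), ?_⟩
        obtain ⟨e, he, hec⟩ := coeff_dom v hrt (q1 ^ 2) ρ2 (2 * m) j (by
          intro i k hik hi
          rcases lt_or_gt_of_ne hi with hi | hi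
          · exact wt_lt_add_right (hq1.trans (gaussVal_le v _ i)) (hj' k (by omega))
          · rw [coeff_eq_zero_of_natDegree_lt (by omega), v.map_zero, top_add]
            exact lt_top_iff_ne_top.mpr hrt)
        rw [hq1top, one_mul] at hec
        obtain ⟨e2, he2, hec2⟩ := coeff_dom v hrt H2 ρ1 0 (2 * m + j) (by
          intro i k hik hi
          exact wt_lt_add_left hrt (hB i (Nat.pos_of_ne_zero hi)) (h12.trans (gaussVal_le v ρ1 k)))
        rw [hρ1d _ (by omega), mul_zero, zero_add, zero_add] at hec2
        rw [hρ, coeff_add, hec, hec2, add_assoc]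
        exact v_add_dom v hj (v.map_lt_add he he2)
      · rw [min_eq_left h12.le] at hsmall ⊢
        have hrt := ne_top_of_lt hsmall
        have h0 := hne hrt
        obtain ⟨j, hj⟩ := gaussVal_attained v h0
        refine ⟨j, hodd ho1 h0 hj, ?_⟩
        obtain ⟨e, he, hec⟩ := coeff_dom v hrt H2 ρ1 0 j (by
          intro i k hik hi
          exact wt_lt_add_left hrt (hB i (Nat.pos_of_ne_zero hi)) (gaussVal_le v ρ1 k))
        rw [zero_add, hH20, one_mul] at hec
        have he2 : gaussVal v ρ1 < v ((q1 ^ 2 * ρ2).coeff j) := by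
          refine lt_of_lt_of_le ?_ (gaussVal_le v _ _)
          rw [gaussVal_mul]
          exact wt_lt_add_right hq1 h12
        rw [hρ, coeff_add, hec, add_comm, add_assoc]
        exact v_add_dom v hj (v.map_lt_add he he2)
  obtain ⟨i, hoddi, hi⟩ := key
  have hle : gaussVal v ρ = min (gaussVal v ρ1) (gaussVal v ρ2) :=
    le_antisymm (hi ▸ gaussVal_le v ρ i) hge
  refine ⟨Or.inr ⟨i, hoddi, ?_⟩, ?_⟩
  · rw [hi, hle]
  · rw [hle]

theorem rootsPoly_cons_comp (a β α : F) (S : Multiset F) :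
    (rootsPoly (a ::ₘ S)).comp (C β * X + C α) =
      (C β * X - C (a - α)) * (rootsPoly S).comp (C β * X + C α) := by
  unfold rootsPoly
  rw [Multiset.map_cons, Multiset.prod_cons, mul_comp]
  congr 1
  simp only [sub_comp, X_comp, C_comp, C_sub]
  ring

theorem inner_form (β α : F) (hβ : β ≠ 0) (S : Multiset F)
    (hS : ∀ a ∈ S, v β ≤ v (a - α)) :
    ∃ c : F, ∃ H : F[X], c ≠ 0 ∧ (rootsPoly S).comp (C β * X + C α) = C c * H ∧
      H.Monic ∧ H.natDegree = Multiset.card S ∧ (∀ i, 0 ≤ v (H.coeff i)) ∧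
      ((∀ a ∈ S, v β < v (a - α)) → ∀ i < Multiset.card S, 0 < v (H.coeff i)) := by
  induction S using Multiset.induction_on with
  | empty =>
    refine ⟨1, 1, one_ne_zero, by simp [rootsPoly], monic_one, by simp, ?_, by simp⟩
    intro i
    rw [coeff_one]; split_ifs <;> simp
  | cons a S ih =>
    obtain ⟨c, H, hc, hcomp, hmon, hdeg, hcoef, hpos⟩ :=
      ih (fun a' h => hS a' (Multiset.mem_cons_of_mem h))
    obtain ⟨e, he⟩ : ∃ e, β * e = a - α := ⟨(a - α) / β, by field_simp⟩
    have hve : v β + v e = v (a - α) := by rw [← v.map_mul, he]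
    have hβt := v_ne_top v hβ
    have he0 : 0 ≤ v e := by
      have := hS a (Multiset.mem_cons_self a S)
      rw [← hve] at this
      lift v β to ℚ using hβt with b
      generalize v e = x at this ⊢
      induction x using WithTop.recTopCoe with
      | top => simp
      | coe x => norm_cast at *; linarith
    have h0c : ((X - C e) * H).coeff 0 = -(e * H.coeff 0) := by
      simp [sub_mul]
    have hsc : ∀ n, ((X - C e) * H).coeff (n + 1) = H.coeff n - e * H.coeff (n + 1) := by
      intro n; rw [sub_mul, coeff_sub, coeff_X_mul, coeff_C_mul]
    refine ⟨β * c, (X - C e) * H, mul_ne_zero hβ hc, ?_, (monic_X_sub_C e).mul hmon, ?_, ?_, ?_⟩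
    · rw [rootsPoly_cons_comp, hcomp, ← he, C_mul, C_mul]; ring
    · rw [(monic_X_sub_C e).natDegree_mul hmon, natDegree_X_sub_C, hdeg, Multiset.card_cons, add_comm]
    · intro i
      rcases i with _ | n
      · rw [h0c, v.map_neg, v.map_mul]; exact add_nonneg he0 (hcoef 0)
      · rw [hsc]
        refine le_trans (le_min (hcoef n) ?_) (v.map_sub _ _)
        rw [v.map_mul]; exact add_nonneg he0 (hcoef _)
    · intro hst i hi
      have hep : 0 < v e := by
        have := hst a (Multiset.mem_cons_self a S)
        rw [← hve] at this
        lift v β to ℚ using hβt with b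
        generalize v e = x at this ⊢
        induction x using WithTop.recTopCoe with
        | top => simp
        | coe x => norm_cast at *; linarith
      have hmulpos : ∀ k, 0 < v (e * H.coeff k) := by
        intro k; rw [v.map_mul]; exact add_pos_of_pos_of_nonneg hep (hcoef k)
      rcases i with _ | n
      · rw [h0c, v.map_neg]; exact hmulpos 0
      · rw [hsc]
        rw [Multiset.card_cons] at hi
        exact lt_of_lt_of_le (lt_min (hpos (fun a' h => hst a' (Multiset.mem_cons_of_mem h)) n
          (by omega)) (hmulpos _)) (v.map_sub _ _)

theorem outer_form (β α : F) (hβ : β ≠ 0) (S : Multiset F)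
    (hS : ∀ a ∈ S, v (a - α) ≤ v β) :
    ∃ c : F, ∃ H : F[X], c ≠ 0 ∧ (rootsPoly S).comp (C β * X + C α) = C c * H ∧
      H.coeff 0 = 1 ∧ (∀ i, 0 ≤ v (H.coeff i)) ∧
      ((∀ a ∈ S, v (a - α) < v β) → ∀ i, 0 < i → 0 < v (H.coeff i)) := by
  induction S using Multiset.induction_on with
  | empty =>
    refine ⟨1, 1, one_ne_zero, by simp [rootsPoly], by simp, ?_, ?_⟩
    · intro i
      rw [coeff_one]; split_ifs <;> simp
    · intro _ i hi
      rw [coeff_one, if_neg (by omega)]; simp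
  | cons a S ih =>
    obtain ⟨c, H, hc, hcomp, hone, hcoef, hpos⟩ :=
      ih (fun a' h => hS a' (Multiset.mem_cons_of_mem h))
    have hβt := v_ne_top v hβ
    have haα : a - α ≠ 0 := by
      intro h
      have := hS a (Multiset.mem_cons_self a S)
      rw [h, v.map_zero, top_le_iff] at this
      exact hβt this
    obtain ⟨e, he⟩ : ∃ e, (a - α) * e = β := ⟨β / (a - α), by field_simp⟩
    have hve : v (a - α) + v e = v β := by rw [← v.map_mul, he]
    have hat := v_ne_top v haα
    have he0 : 0 ≤ v e := by
      have := hS a (Multiset.mem_cons_self a S)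
      rw [← hve] at this
      lift v (a - α) to ℚ using hat with b
      generalize v e = x at this ⊢
      induction x using WithTop.recTopCoe with
      | top => simp
      | coe x => norm_cast at *; linarith
    have h0c : ((1 - C e * X) * H).coeff 0 = H.coeff 0 := by
      simp
    have hsc : ∀ n, ((1 - C e * X) * H).coeff (n + 1) = H.coeff (n + 1) - e * H.coeff n := by
      intro n; rw [sub_mul, coeff_sub, one_mul, mul_assoc, coeff_C_mul, coeff_X_mul]
    refine ⟨-(a - α) * c, (1 - C e * X) * H, mul_ne_zero (neg_ne_zero.mpr haα) hc, ?_,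
      h0c.trans hone, ?_, ?_⟩
    · rw [rootsPoly_cons_comp, hcomp, ← he, C_mul, C_mul, C_neg]; ring
    · intro i
      rcases i with _ | n
      · rw [h0c]; exact hcoef 0
      · rw [hsc]
        refine le_trans (le_min (hcoef _) ?_) (v.map_sub _ _)
        rw [v.map_mul]; exact add_nonneg he0 (hcoef _)
    · intro hst i hi
      have hep : 0 < v e := by
        have := hst a (Multiset.mem_cons_self a S)
        rw [← hve] at this
        lift v (a - α) to ℚ using hat with b
        generalize v e = x at this ⊢
        induction x using WithTop.recTopCoe with
        | top => simp
        | coe x => norm_cast at *; linarith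
      rcases i with _ | n
      · omega
      · rw [hsc]
        refine lt_of_lt_of_le (lt_min (hpos (fun a' h => hst a' (Multiset.mem_cons_of_mem h)) _
          (by omega)) ?_) (v.map_sub _ _)
        rw [v.map_mul]; exact add_pos_of_pos_of_nonneg hep (hcoef n)

theorem gaussVal_eq_zero {H : F[X]} (hcoef : ∀ i, 0 ≤ v (H.coeff i)) (i : ℕ)
    (hi : H.coeff i = 1) : gaussVal v H = 0 := by
  apply le_antisymm
  · have := gaussVal_le v H i
    rwa [hi, v.map_one] at this
  · rwa [le_gaussVal]

/-- Passing from `TVal` to a fixed `β`, up to a unit scaling. -/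
theorem TVal_poly (S : Multiset F) (α β : F) (b t : ℚ) (hβ : β ≠ 0)
    (hvβ : v β = (b : WithTop ℚ)) (h : TVal v S α b t) :
    ∃ u : F, v u = 0 ∧
      PolyT v (((rootsPoly S).comp (C β * X + C α)).comp (C u * X)) t := by
  obtain ⟨β', hβ', hvβ', h⟩ := h
  obtain ⟨u, hu⟩ : ∃ u, β * u = β' := ⟨β' / β, by field_simp⟩
  refine ⟨u, ?_, ?_⟩
  · have : v β + v u = v β' := by rw [← v.map_mul, hu]
    rw [hvβ, hvβ'] at this
    generalize v u = x at this
    induction x using WithTop.recTopCoe with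
    | top => simp at this
    | coe x => norm_cast at *; linarith
  · have : ((rootsPoly S).comp (C β * X + C α)).comp (C u * X) =
        (rootsPoly S).comp (C β' * X + C α) := by
      rw [comp_assoc]
      congr 1
      simp only [add_comp, mul_comp, C_comp, X_comp, ← hu, C_mul]
      ring
    rw [this]
    exact h

theorem two_nonneg_val : 0 ≤ v 2 := by
  have := v.map_add 1 1
  rw [v.map_one, min_self, one_add_one_eq_two] at this
  exact this

end helpers

/-- Let `f` be nonzero with multiset of roots `R`, let `𝔰 ≤ R` be a
sub-multiset of even cardinality, and assume `d₋(𝔰,α) < d₊(𝔰,α)` (i.e. every root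
outside `𝔰` is strictly closer to `α` than `d₊(𝔰,α) = inf_{a ∈ 𝔰} v (a − α)`).
Then for every rational `b` with `d₋(𝔰,α) ≤ b ≤ d₊(𝔰,α)` one has
`𝔱^R(α,b) = min (𝔱^𝔰(α,b), 𝔱^{R∖𝔰}(α,b))`. -/
theorem stmt11 {Kbar : Type*} [Field Kbar] [DecidableEq Kbar] [IsAlgClosed Kbar]
    (v : AddValuation Kbar (WithTop ℚ)) (hchar : (2 : Kbar) ≠ 0)
    (hres : ResidueAlgClosed v)
    (hsurj : ∀ b : ℚ, ∃ β : Kbar, β ≠ 0 ∧ v β = (b : WithTop ℚ))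
    (f : Kbar[X]) (hf : f ≠ 0) (𝔰 : Multiset Kbar) (h𝔰 : 𝔰 ≤ f.roots)
    (heven : Even (Multiset.card 𝔰)) (α : Kbar)
    (hlt : ∀ a' ∈ f.roots - 𝔰, v (a' - α) < (𝔰.map fun a => v (a - α)).inf)
    (b : ℚ)
    (hb₁ : ∀ a' ∈ f.roots - 𝔰, v (a' - α) ≤ (b : WithTop ℚ))
    (hb₂ : (b : WithTop ℚ) ≤ (𝔰.map fun a => v (a - α)).inf) :
    ∀ t t₁ t₂ : ℚ, TVal v f.roots α b t → TVal v 𝔰 α b t₁ →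
      TVal v (f.roots - 𝔰) α b t₂ → t = min t₁ t₂ := by
  intro t t₁ t₂ hT hT₁ hT₂
  obtain ⟨β, hβ, hvβ⟩ := hsurj b
  have hinf : ∀ a ∈ 𝔰, (𝔰.map fun a => v (a - α)).inf ≤ v (a - α) := fun a ha =>
    Multiset.inf_le (Multiset.mem_map_of_mem (fun a => v (a - α)) ha)
  obtain ⟨c1, H1, hc1, hcomp1, hmon1, hdeg1, hcoef1, hpos1⟩ :=
    inner_form v β α hβ 𝔰 (fun a ha => by rw [hvβ]; exact hb₂.trans (hinf a ha))
  obtain ⟨c2, H2, hc2, hcomp2, hone2, hcoef2, hpos2⟩ :=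
    outer_form v β α hβ (f.roots - 𝔰) (fun a ha => by rw [hvβ]; exact hb₁ a ha)
  obtain ⟨u, hu, hP⟩ := TVal_poly v _ α β b t hβ hvβ hT
  obtain ⟨u1, hu1, hP1⟩ := TVal_poly v _ α β b t₁ hβ hvβ hT₁
  obtain ⟨u2, hu2, hP2⟩ := TVal_poly v _ α β b t₂ hβ hvβ hT₂
  have hcomp : (rootsPoly f.roots).comp (C β * X + C α) = C (c1 * c2) * (H1 * H2) := by
    have : rootsPoly f.roots = rootsPoly 𝔰 * rootsPoly (f.roots - 𝔰) := by
      conv_lhs => rw [← Multiset.add_sub_cancel h𝔰]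
      unfold rootsPoly
      rw [Multiset.map_add, Multiset.prod_add, mul_comm]
    rw [this, mul_comp, hcomp1, hcomp2, C_mul]; ring
  rw [hcomp, mul_comp, C_comp] at hP
  rw [hcomp1, mul_comp, C_comp] at hP1
  rw [hcomp2, mul_comp, C_comp] at hP2
  obtain ⟨m, hm⟩ := heven
  rw [hm, ← two_mul] at hdeg1
  have hH1 : gaussVal v H1 = 0 := gaussVal_eq_zero v hcoef1 (2 * m) (by rw [← hdeg1]; exact hmon1)
  have hH2 : gaussVal v H2 = 0 := gaussVal_eq_zero v hcoef2 0 hone2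
  have hH : gaussVal v (H1 * H2) = 0 := by rw [gaussVal_mul, hH1, hH2, zero_add]
  rcases (two_nonneg_val v).eq_or_lt with hv2 | hv2
  · have hz : ∀ (c u : Kbar) (H : Kbar[X]), c ≠ 0 → v u = 0 → gaussVal v H = 0 →
        C c * H.comp (C u * X) ≠ 0 := by
      intro c u H hc hu hH h0
      have := gaussVal_tr v c u hu H
      rw [h0, gaussVal_zero, hH, add_zero] at this
      exact v_ne_top v hc this.symm
    rw [polyT_zero v hv2.symm (hz _ _ _ (mul_ne_zero hc1 hc2) hu hH) hP,
      polyT_zero v hv2.symm (hz _ _ _ hc1 hu1 hH1) hP1,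
      polyT_zero v hv2.symm (hz _ _ _ hc2 hu2 hH2) hP2, min_self]
  · have hAB : (∀ i < 2 * m, 0 < v (H1.coeff i)) ∨ (∀ i, 0 < i → 0 < v (H2.coeff i)) := by
      rcases hb₂.lt_or_eq with h | h
      · left
        intro i hi
        exact hpos1 (fun a ha => by rw [hvβ]; exact lt_of_lt_of_le h (hinf a ha)) i (by omega)
      · right
        exact hpos2 (fun a ha => by rw [hvβ, h]; exact hlt a ha)
    obtain ⟨q1, ρ1, hp1, ho1⟩ := exists_totally_odd H1
    obtain ⟨q2, ρ2, hp2, ho2⟩ := exists_totally_odd H2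
    obtain ⟨q, ρ, hp, hg, hmin⟩ := core v hv2 hmon1 hdeg1 hH1 hH2 hone2 hAB
      hp1 ho1 hp2 ho2
    have e := transport v hv2 hp hg hH _ _ (mul_ne_zero hc1 hc2) hu hP
    have e1 := transport v hv2 hp1 (totally_odd_good v ho1) hH1 _ _ hc1 hu1 hP1
    have e2 := transport v hv2 hp2 (totally_odd_good v ho2) hH2 _ _ hc2 hu2 hP2
    rw [hmin, ← e1, ← e2] at e
    exact_mod_cast e
end

section
/- Let h ∈ K̄[z] be nonzero of degree d ≥ 1 all of whose roots in K̄ have valuation ≤ 0, let S be the multiset of roots of h, and define φ(b) := 𝔱^S(0, b) for rational b ≥ 0. Let d° be the largest odd integer with d° ≤ d. Then: (i) 0 ≤ φ(b) ≤ 2v(2) for all b ≥ 0, and φ is nondecreasing; (ii) for all rationals 0 ≤ b ≤ b′ one has min{φ(b) + (b′ − b), 2v(2)} ≤ φ(b′) ≤ min{φ(b) + d°·(b′ − b), 2v(2)} (so φ is strictly increasing, with slopes between 1 and d°, until it reaches the value 2v(2), after which it is constantly equal to 2v(2)); (iii) φ(b) = 2v(2) for all sufficiently large rational b; (iv) consequently,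 every b ≥ 0 with φ(b) = 2v(2) satisfies b ≥ (2v(2) − φ(0))/d°, and the least such b is at most 2v(2). -/
open Polynomial

section aux

variable {Kbar : Type*} [Field Kbar] (v : AddValuation Kbar (WithTop ℚ))

theorem le_gaussVal_iff (m : WithTop ℚ) (p : Kbar[X]) :
    m ≤ gaussVal v p ↔ ∀ i, m ≤ v (p.coeff i) := by
  unfold gaussVal
  rw [Finset.le_inf_iff]
  constructor
  · intro H i
    by_cases hi : p.coeff i = 0
    · rw [hi]; simp
    · exact H i (mem_support_iff.mpr hi)
  · intro H i _
    exact H i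

theorem gaussVal_le_coeff (p : Kbar[X]) (i : ℕ) : gaussVal v p ≤ v (p.coeff i) :=
  (le_gaussVal_iff v _ p).1 le_rfl i

theorem exists_gaussVal_eq (p : Kbar[X]) (hp : p ≠ 0) :
    ∃ i, p.coeff i ≠ 0 ∧ gaussVal v p = v (p.coeff i) := by
  have hne : p.support.Nonempty := by simpa using hp
  obtain ⟨i, hi, h⟩ := Finset.exists_mem_eq_inf p.support hne (fun i => v (p.coeff i))
  exact ⟨i, mem_support_iff.mp hi, h⟩

theorem coeff_mul_ge {m n : WithTop ℚ} {p q : Kbar[X]} (hp : ∀ i, m ≤ v (p.coeff i))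
    (hq : ∀ i, n ≤ v (q.coeff i)) (i : ℕ) : m + n ≤ v ((p * q).coeff i) := by
  rw [coeff_mul]
  apply AddValuation.map_le_sum
  intro x _
  rw [AddValuation.map_mul]
  exact add_le_add (hp _) (hq _)

theorem sq_sum_decomp (m : WithTop ℚ) (e : ℕ → Kbar) (he : ∀ i, m ≤ v (e i)) (s : Finset ℕ) :
    ∃ g : Kbar[X], (∀ i, m + m ≤ v (g.coeff i)) ∧
      (∑ i ∈ s, monomial i (e i)) ^ 2 = ∑ i ∈ s, monomial (2 * i) (e i ^ 2) + 2 * g := by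
  classical
  induction s using Finset.induction_on with
  | empty => exact ⟨0, by simp, by simp⟩
  | insert a s ha ih =>
    obtain ⟨g, hg, hgs⟩ := ih
    refine ⟨g + monomial a (e a) * ∑ i ∈ s, monomial i (e i), ?_, ?_⟩
    · intro i
      rw [coeff_add]
      refine AddValuation.map_le_add v (hg i) (coeff_mul_ge v ?_ ?_ i)
      · intro j
        rw [coeff_monomial]
        split_ifs
        · exact he _
        · simp
      · intro j
        rw [finsetSum_coeff]
        apply AddValuation.map_le_sum
        intro k _
        rw [coeff_monomial]
        split_ifs
        · exact he _
        · simp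
    · rw [Finset.sum_insert ha, Finset.sum_insert ha, add_sq, hgs, monomial_pow, mul_comm a 2]
      ring

theorem coeff_sq_even (e : Kbar[X]) (m : WithTop ℚ) (he : ∀ i, m ≤ v (e.coeff i)) :
    ∃ g : Kbar[X], (∀ i, m + m ≤ v (g.coeff i)) ∧
      ∀ i, (e ^ 2).coeff (2 * i) = e.coeff i ^ 2 + 2 * g.coeff (2 * i) := by
  obtain ⟨g, hg, h⟩ := sq_sum_decomp v m e.coeff he e.support
  refine ⟨g, hg, fun i => ?_⟩
  have h1 : ∑ i ∈ e.support, monomial i (e.coeff i) = e := e.as_sum_support.symm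
  rw [h1] at h
  rw [h, coeff_add, finsetSum_coeff]
  congr 1
  · simp only [coeff_monomial]
    rw [Finset.sum_eq_single i]
    · simp
    · intro j _ hj
      rw [if_neg (by omega)]
    · intro hi
      simp at hi
      simp [hi]
  · have : (2 : Kbar[X]) = C 2 := (map_ofNat C 2).symm
    rw [this, coeff_C_mul]

theorem exists_sq_coeff (h2 : 0 < v 2) (e : Kbar[X]) (he : e ≠ 0) :
    ∃ i, gaussVal v e ≠ ⊤ ∧ v ((e ^ 2).coeff (2 * i)) = gaussVal v e + gaussVal v e := by
  obtain ⟨i, hi0, hi⟩ := exists_gaussVal_eq v e he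
  have hfin : gaussVal v e ≠ ⊤ := by
    rw [hi]; exact (AddValuation.ne_top_iff v).2 hi0
  obtain ⟨g, hg, h⟩ := coeff_sq_even v e _ (gaussVal_le_coeff v e)
  refine ⟨i, hfin, ?_⟩
  have hsq : v (e.coeff i ^ 2) = gaussVal v e + gaussVal v e := by
    rw [pow_two, AddValuation.map_mul, hi]
  rw [h, ← hsq]
  apply AddValuation.map_add_eq_of_lt_left
  rw [hsq, AddValuation.map_mul]
  refine lt_of_lt_of_le ?_ (add_le_add_right (hg (2 * i)) (v 2))
  obtain ⟨m, hm⟩ := WithTop.ne_top_iff_exists.1 hfin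
  rw [← hm]
  rcases hw : v 2 with _ | w
  · exact WithTop.coe_lt_top _
  · rw [hw] at h2
    have h2' : 0 < w := WithTop.coe_lt_coe.1 h2
    change ((m + m : ℚ) : WithTop ℚ) < ((w + (m + m) : ℚ) : WithTop ℚ)
    exact_mod_cast (by linarith)

theorem core_q (h2 : 0 < v 2) (c : WithTop ℚ) (F q ρ : Kbar[X])
    (hF : F = q ^ 2 + ρ) (hev : ∀ i, ρ.coeff (2 * i) = 0) (hc : ∀ i, c ≤ v (F.coeff i)) :
    c ≤ gaussVal v q + gaussVal v q := by
  by_cases hq : q = 0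
  · subst hq; simp [gaussVal]
  · obtain ⟨i, _, hi⟩ := exists_sq_coeff v h2 q hq
    rw [← hi]
    have := hc (2 * i)
    rwa [hF, coeff_add, hev, add_zero] at this

theorem core_rho (h2 : 0 < v 2) (c : WithTop ℚ) (F q ρ : Kbar[X])
    (hF : F = q ^ 2 + ρ) (hev : ∀ i, ρ.coeff (2 * i) = 0) (hc : ∀ i, c ≤ v (F.coeff i)) :
    c ≤ gaussVal v ρ := by
  have h := core_q v h2 c F q ρ hF hev hc
  rw [le_gaussVal_iff]
  intro i
  have : ρ = F - q * q := by rw [hF]; ring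
  rw [this, coeff_sub]
  exact AddValuation.map_le_sub v (hc i)
    (h.trans (coeff_mul_ge v (gaussVal_le_coeff v q) (gaussVal_le_coeff v q) i))

theorem core_max (h2 : 0 < v 2) (c : WithTop ℚ) (F q ρ : Kbar[X])
    (hF : F = q ^ 2 + ρ) (hev : ∀ i, ρ.coeff (2 * i) = 0) (hc : ∀ i, c ≤ v (F.coeff i))
    (q' ρ' : Kbar[X]) (hF' : F = q' ^ 2 + ρ') :
    min (c + (v 2 + v 2)) (gaussVal v ρ') ≤ gaussVal v ρ := by
  have hq := core_q v h2 c F q ρ hF hev hc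
  obtain ⟨e, rfl⟩ : ∃ e, q' = q + e := ⟨q' - q, by ring⟩
  have hρ : ρ = ρ' + (e ^ 2 + 2 * q * e) := by linear_combination hF' - hF
  have hqe : ∀ i, v 2 + gaussVal v q + gaussVal v e ≤ v ((2 * q * e).coeff i) := by
    refine coeff_mul_ge v (fun i => ?_) (gaussVal_le_coeff v e)
    have : (2 : Kbar[X]) = C 2 := (map_ofNat C 2).symm
    rw [this, coeff_C_mul, AddValuation.map_mul]
    exact add_le_add_right (gaussVal_le_coeff v q i) _
  have hee : ∀ i, gaussVal v e + gaussVal v e ≤ v ((e ^ 2).coeff i) := by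
    rw [pow_two]
    exact coeff_mul_ge v (gaussVal_le_coeff v e) (gaussVal_le_coeff v e)
  rw [le_gaussVal_iff]
  intro i
  by_cases he : e = 0
  · subst he
    have : ρ = ρ' := by simpa using hρ
    rw [this]
    exact (min_le_right _ _).trans (gaussVal_le_coeff v _ i)
  obtain ⟨j, hfin, hj⟩ := exists_sq_coeff v h2 e he
  rcases lt_or_ge (gaussVal v e) (v 2 + gaussVal v q) with hlt | hge
  · have hlt2 : gaussVal v e + gaussVal v e < v 2 + gaussVal v q + gaussVal v e :=
      WithTop.add_lt_add_right hfin hlt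
    have h0 : ρ'.coeff (2 * j) = - ((e ^ 2).coeff (2 * j) + (2 * q * e).coeff (2 * j)) := by
      have := congrArg (fun p => coeff p (2 * j)) hρ
      simp only [coeff_add, hev] at this
      linear_combination -this
    have h1 : v (ρ'.coeff (2 * j)) = gaussVal v e + gaussVal v e := by
      rw [h0, AddValuation.map_neg, ← hj]
      apply AddValuation.map_add_eq_of_lt_left
      rw [hj]
      exact hlt2.trans_le (hqe _)
    have h3 : gaussVal v ρ' ≤ gaussVal v e + gaussVal v e := h1 ▸ gaussVal_le_coeff v ρ' _
    refine (min_le_right _ _).trans ?_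
    rw [hρ, coeff_add, coeff_add]
    exact AddValuation.map_le_add v (gaussVal_le_coeff v _ i)
      (AddValuation.map_le_add v (h3.trans (hee i)) (h3.trans (hlt2.le.trans (hqe i))))
  · have hb : c + (v 2 + v 2) ≤ (v 2 + gaussVal v q) + (v 2 + gaussVal v q) := by
      calc c + (v 2 + v 2) ≤ (gaussVal v q + gaussVal v q) + (v 2 + v 2) :=
            add_le_add_left hq _
        _ = _ := by abel
    rw [hρ, coeff_add, coeff_add]
    exact AddValuation.map_le_add v ((min_le_right _ _).trans (gaussVal_le_coeff v _ i))
      (AddValuation.map_le_add v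
        ((min_le_left _ _).trans (hb.trans ((add_le_add hge hge).trans (hee i))))
        ((min_le_left _ _).trans (hb.trans ((add_le_add_right hge _).trans (hqe i)))))

theorem exists_factor [IsAlgClosed Kbar] (g : Kbar[X]) :
    ∃ F : Kbar[X], F.natDegree ≤ g.natDegree ∧ F * F.comp (-X) = expand Kbar 2 g := by
  obtain ⟨im, him⟩ := IsAlgClosed.exists_pow_nat_eq (-1 : Kbar) (n := 2) (by norm_num)
  have key : ∀ S : Multiset Kbar, ∃ F : Kbar[X], F.natDegree ≤ Multiset.card S ∧
      F * F.comp (-X) = expand Kbar 2 ((S.map fun a => X - C a).prod) := by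
    intro S
    induction S using Multiset.induction_on with
    | empty => exact ⟨1, by simp, by simp⟩
    | cons a S ih =>
      obtain ⟨F, hd, hF⟩ := ih
      obtain ⟨s, hs⟩ := IsAlgClosed.exists_pow_nat_eq a (n := 2) (by norm_num)
      refine ⟨C im * (X - C s) * F, ?_, ?_⟩
      · rw [Multiset.card_cons]
        have h1 : (C im * (X - C s)).natDegree ≤ 1 :=
          (natDegree_C_mul_le _ _).trans (natDegree_X_sub_C_le s)
        have := natDegree_mul_le (p := C im * (X - C s)) (q := F)
        omega
      · rw [Multiset.map_cons, Multiset.prod_cons, map_mul, ← hF]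
        simp only [mul_comp, sub_comp, X_comp, C_comp, map_sub, expand_X, expand_C]
        have e1 : (C im : Kbar[X]) ^ 2 = -1 := by rw [← C_pow, him]; simp
        have e2 : (C s : Kbar[X]) ^ 2 = C a := by rw [← C_pow, hs]
        linear_combination (-(X ^ 2 - C s ^2) * F * F.comp (-X)) * e1 - F * F.comp (-X) * e2
  obtain ⟨F, hd, hF⟩ := key g.roots
  obtain ⟨l, hl⟩ := IsAlgClosed.exists_pow_nat_eq g.leadingCoeff (n := 2) (by norm_num)
  refine ⟨C l * F, ?_, ?_⟩
  · exact (natDegree_C_mul_le _ _).trans (hd.trans (card_roots' g))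
  · have hg := (IsAlgClosed.splits g).eq_prod_roots
    conv_rhs => rw [hg]
    rw [map_mul, ← hF, expand_C, ← hl, mul_comp, C_comp, C_pow]
    ring

theorem exists_totally_odd_s12 [IsAlgClosed Kbar] (hchar : (2 : Kbar) ≠ 0) (f : Kbar[X]) :
    ∃ q ρ : Kbar[X], f = q ^ 2 + ρ ∧ 2 * q.natDegree ≤ f.natDegree ∧
      ∀ i, ρ.coeff (2 * i) = 0 := by
  obtain ⟨im, him⟩ := IsAlgClosed.exists_pow_nat_eq (-1 : Kbar) (n := 2) (by norm_num)
  obtain ⟨F, hd, hF⟩ := exists_factor (C (2 * im) * contract 2 f)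
  have hcd : 2 * (contract 2 f).natDegree ≤ f.natDegree := by
    by_cases h0 : contract 2 f = 0
    · simp [h0]
    have h1 : (contract 2 f).coeff (contract 2 f).natDegree ≠ 0 := by
      simpa using h0
    rw [coeff_contract (by norm_num)] at h1
    have := le_natDegree_of_ne_zero h1
    omega
  have hFd : 2 * F.natDegree ≤ f.natDegree := by
    have := natDegree_C_mul_le (2 * im) (contract 2 f)
    omega
  have hG : (F.comp (-X)).natDegree = F.natDegree := by
    rw [natDegree_comp]; simp
  refine ⟨C (1/2) * (F - C im * F.comp (-X)), f - (C (1/2) * (F - C im * F.comp (-X))) ^ 2,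
    by ring, ?_, ?_⟩
  · have h1 : (C (1/2) * (F - C im * F.comp (-X))).natDegree ≤ F.natDegree := by
      refine (natDegree_C_mul_le _ _).trans ((natDegree_sub_le _ _).trans ?_)
      refine max_le le_rfl ((natDegree_C_mul_le _ _).trans hG.le)
    omega
  · intro i
    have e1 : (C im : Kbar[X]) ^ 2 = -1 := by rw [← C_pow, him]; simp
    have e2 : (C (1/2) : Kbar[X]) ^ 2 = C (1/4) := by rw [← C_pow]; norm_num
    have hsq : (C (1/2) * (F - C im * F.comp (-X))) ^ 2
        = C (1/4) * (F ^ 2 - (F ^ 2).comp (-X)) - C (1/4 * (2 * im)) * (F * F.comp (-X)) := by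
      have e3 : (C (1/4 * (2 * im)) : Kbar[X]) = C (1/4) * (2 * C im) := by
        rw [C_mul, C_mul, map_ofNat C 2]
      rw [e3, pow_comp]
      linear_combination (F - C im * F.comp (-X))^2 * e2 + C (1/4) * (F.comp (-X))^2 * e1
    have h4 : (4 : Kbar) ≠ 0 := by
      have : (4 : Kbar) = 2 * 2 := by norm_num
      rw [this]; exact mul_ne_zero hchar hchar
    rw [hsq, hF]
    have hco : ((F ^ 2).comp (-X)).coeff (2 * i) = (F ^ 2).coeff (2 * i) := by
      have : (-X : Kbar[X]) = C (-1) * X := by simp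
      rw [this, comp_C_mul_X_coeff]; simp
    have hex : (expand Kbar 2 (C (2 * im) * contract 2 f)).coeff (2 * i)
        = 2 * im * f.coeff (2 * i) := by
      rw [mul_comm 2 i, coeff_expand_mul (by norm_num), coeff_C_mul,
        coeff_contract (by norm_num)]
    simp only [coeff_sub, coeff_C_mul, hco, sub_self, mul_zero, zero_sub, hex]
    field_simp
    linear_combination 4 * f.coeff (2 * i) * him

theorem rootsPoly_coeff (S : Multiset Kbar) (hS : ∀ x ∈ S, v x ≤ 0) :
    (rootsPoly S).coeff 0 ≠ 0 ∧
      ∀ i, v ((rootsPoly S).coeff 0) ≤ v ((rootsPoly S).coeff i) := by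
  unfold rootsPoly
  induction S using Multiset.induction_on with
  | empty =>
    refine ⟨by simp, fun i => ?_⟩
    rcases i with _ | i
    · exact le_rfl
    · simp [coeff_one]
  | cons a S ih =>
    obtain ⟨h0, hi⟩ := ih (fun x hx => hS x (Multiset.mem_cons_of_mem hx))
    have ha := hS a (Multiset.mem_cons_self a S)
    have ha0 : a ≠ 0 := by
      rintro rfl
      simp at ha
    rw [Multiset.map_cons, Multiset.prod_cons]
    set p := (S.map fun a => X - C a).prod
    have hz : ((X - C a) * p).coeff 0 = -(a * p.coeff 0) := by
      simp [sub_mul, mul_coeff_zero]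
    refine ⟨by rw [hz]; exact neg_ne_zero.2 (mul_ne_zero ha0 h0), fun i => ?_⟩
    rcases i with _ | i
    · exact le_rfl
    · rw [hz, AddValuation.map_neg, AddValuation.map_mul, sub_mul, coeff_sub, coeff_X_mul,
        coeff_C_mul]
      refine AddValuation.map_le_sub v ?_ ?_
      · calc v a + v (p.coeff 0) ≤ 0 + v (p.coeff 0) := add_le_add_left ha _
          _ ≤ _ := by rw [zero_add]; exact hi i
      · rw [AddValuation.map_mul]
        exact add_le_add_right (hi _) _

/-- Gauss valuation after scaling the variable by an element of valuation `b`. -/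
noncomputable def vb (b : ℚ) (p : Kbar[X]) : WithTop ℚ :=
  p.support.inf fun i => v (p.coeff i) + ((i * b : ℚ) : WithTop ℚ)

theorem v_pow_eq (β : Kbar) (b : ℚ) (hb : v β = (b : WithTop ℚ)) (i : ℕ) :
    v (β ^ i) = ((i * b : ℚ) : WithTop ℚ) := by
  induction i with
  | zero => simp
  | succ n ih =>
    rw [pow_succ, AddValuation.map_mul, ih, hb]
    rw [← WithTop.coe_add]
    congr 1
    push_cast
    ring

theorem coeff_comp_lin (p : Kbar[X]) (β : Kbar) (i : ℕ) :
    (p.comp (C β * X + C 0)).coeff i = p.coeff i * β ^ i := by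
  rw [C_0, add_zero, comp_C_mul_X_coeff]

theorem gaussVal_comp (p : Kbar[X]) (β : Kbar) (hβ : β ≠ 0) (b : ℚ)
    (hb : v β = (b : WithTop ℚ)) : gaussVal v (p.comp (C β * X + C 0)) = vb v b p := by
  have hs : (p.comp (C β * X + C 0)).support = p.support := by
    ext i
    rw [mem_support_iff, mem_support_iff, coeff_comp_lin]
    simp [hβ]
  unfold gaussVal vb
  rw [hs]
  refine Finset.inf_congr rfl fun i _ => ?_
  rw [coeff_comp_lin, AddValuation.map_mul, v_pow_eq v β b hb]

theorem natDegree_comp_lin (p : Kbar[X]) (β : Kbar) (hβ : β ≠ 0) :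
    (p.comp (C β * X + C 0)).natDegree = p.natDegree := by
  rw [natDegree_comp, C_0, add_zero, natDegree_C_mul_X β hβ, mul_one]

theorem two_nonneg : 0 ≤ v (2 : Kbar) := by
  have : (2 : Kbar) = 1 + 1 := by norm_num
  rw [this]
  exact AddValuation.map_le_add v (by simp) (by simp)

theorem key [IsAlgClosed Kbar] (hchar : (2 : Kbar) ≠ 0)
    (S : Multiset Kbar) (hS : ∀ x ∈ S, v x ≤ 0) :
    ∃ ρ : Kbar[X], (∀ i, ρ.coeff i ≠ 0 → Odd i ∧ i ≤ Multiset.card S) ∧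
      (∀ i, v ((rootsPoly S).coeff 0) ≤ v (ρ.coeff i)) ∧
      ∀ b : ℚ, 0 ≤ b → ∀ β : Kbar, β ≠ 0 → v β = (b : WithTop ℚ) →
        gaussVal v ((rootsPoly S).comp (C β * X + C 0)) = v ((rootsPoly S).coeff 0) ∧
        IsLUB {u : WithTop ℚ |
          ∃ q ρ : Kbar[X], IsPSD ((rootsPoly S).comp (C β * X + C 0)) q ρ ∧
            u = min (gaussVal v ((rootsPoly S).comp (C β * X + C 0)) + (v 2 + v 2))
                (gaussVal v ρ)}
          (min (v ((rootsPoly S).coeff 0) + (v 2 + v 2)) (vb v b ρ)) := by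
  obtain ⟨h0, hmin⟩ := rootsPoly_coeff v S hS
  have hdeg : (rootsPoly S).natDegree = Multiset.card S := by
    unfold rootsPoly
    rw [natDegree_multiset_prod_X_sub_C_eq_card]
  set f := rootsPoly S
  have hco : ∀ b : ℚ, 0 ≤ b → ∀ β : Kbar, v β = (b : WithTop ℚ) → ∀ i,
      v (f.coeff 0) ≤ v ((f.comp (C β * X + C 0)).coeff i) := by
    intro b hb β hβ i
    rw [coeff_comp_lin, AddValuation.map_mul, v_pow_eq v β b hβ]
    have : (0 : WithTop ℚ) ≤ ((i * b : ℚ) : WithTop ℚ) := by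
      have : (0 : ℚ) ≤ i * b := by positivity
      exact_mod_cast this
    calc v (f.coeff 0) ≤ v (f.coeff i) + 0 := by rw [add_zero]; exact hmin i
      _ ≤ _ := add_le_add_right this _
  have hgv : ∀ b : ℚ, 0 ≤ b → ∀ β : Kbar, v β = (b : WithTop ℚ) →
      gaussVal v (f.comp (C β * X + C 0)) = v (f.coeff 0) := by
    intro b hb β hβ
    apply le_antisymm
    · have := gaussVal_le_coeff v (f.comp (C β * X + C 0)) 0
      rwa [coeff_comp_lin, pow_zero, mul_one] at this
    · rw [le_gaussVal_iff]
      exact hco b hb β hβ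
  rcases (two_nonneg v).eq_or_lt with h2 | h2
  · refine ⟨0, by simp, by simp, fun b hb β hβ0 hβ => ⟨hgv b hb β hβ, ?_⟩⟩
    rw [hgv b hb β hβ, ← h2]
    have : vb v b (0 : Kbar[X]) = ⊤ := by simp [vb]
    rw [this, min_eq_left le_top]
    apply IsGreatest.isLUB
    constructor
    · obtain ⟨s, hs⟩ := IsAlgClosed.exists_pow_nat_eq (f.coeff 0) (n := 2) (by norm_num)
      refine ⟨C s, f.comp (C β * X + C 0) - C s ^ 2, ⟨by ring, by simp⟩, ?_⟩
      symm
      apply min_eq_left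
      rw [add_zero, add_zero, le_gaussVal_iff]
      intro i
      rw [coeff_sub, ← C_pow, hs]
      refine AddValuation.map_le_sub v (hco b hb β hβ i) ?_
      rw [coeff_C]
      split_ifs
      · exact le_rfl
      · simp
    · rintro u ⟨q, ρ, _, rfl⟩
      exact min_le_left _ _
  · obtain ⟨q, ρ, hF, hqd, hev⟩ := exists_totally_odd_s12 hchar f
    refine ⟨ρ, ?_, ?_, fun b hb β hβ0 hβ => ⟨hgv b hb β hβ, ?_⟩⟩
    · intro i hi
      refine ⟨?_, ?_⟩
      · by_contra hodd
        rw [Nat.not_odd_iff_even] at hodd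
        obtain ⟨j, rfl⟩ := hodd
        exact hi (by rw [← two_mul]; exact hev j)
      · have h1 := le_natDegree_of_ne_zero hi
        have h3 : ρ = f - q ^ 2 := by rw [hF]; ring
        have h4 := natDegree_sub_le f (q ^ 2)
        rw [← h3] at h4
        have h5 := natDegree_pow_le (p := q) (n := 2)
        have := max_le (le_refl f.natDegree) (h5.trans hqd)
        omega
    · have := core_rho v h2 _ f q ρ hF hev hmin
      rwa [le_gaussVal_iff] at this
    · have hFc : f.comp (C β * X + C 0)
          = (q.comp (C β * X + C 0)) ^ 2 + ρ.comp (C β * X + C 0) := by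
        conv_lhs => rw [hF]
        rw [add_comp, pow_comp]
      have hevc : ∀ i, (ρ.comp (C β * X + C 0)).coeff (2 * i) = 0 := by
        intro i
        rw [coeff_comp_lin, hev, zero_mul]
      rw [hgv b hb β hβ]
      apply IsGreatest.isLUB
      constructor
      · refine ⟨_, _, ⟨hFc, ?_⟩, ?_⟩
        · rw [natDegree_comp_lin _ _ hβ0, natDegree_comp_lin _ _ hβ0]
          omega
        · rw [gaussVal_comp v ρ β hβ0 b hβ]
      · rintro u ⟨q', ρ', ⟨hF', _⟩, rfl⟩
        refine le_min (min_le_left _ _) ?_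
        rw [← gaussVal_comp v ρ β hβ0 b hβ]
        exact core_max v h2 _ _ _ _ hFc hevc (hco b hb β hβ) q' ρ' hF'

end aux

/-- Let `h` be nonzero of degree `d ≥ 1` with all roots of valuation
`≤ 0`, `S` its multiset of roots, `φ(b) := 𝔱^S(0,b)` for `b ≥ 0` (expressed via the
relation `TVal`), and `d°` the largest odd integer `≤ d`.  Then:
(i) `0 ≤ φ ≤ 2 v 2` and `φ` is nondecreasing; (ii) for `0 ≤ b ≤ b'`,
`min (φ b + (b' − b), 2 v 2) ≤ φ b' ≤ min (φ b + d° (b' − b), 2 v 2)`;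
(iii) `φ(b) = 2 v 2` for all sufficiently large `b`; (iv) any `b ≥ 0` with
`φ(b) = 2 v 2` satisfies `b ≥ (2 v 2 − φ 0)/d°`, and the least such `b` is `≤ 2 v 2`. -/
theorem stmt12 {Kbar : Type*} [Field Kbar] [IsAlgClosed Kbar]
    (v : AddValuation Kbar (WithTop ℚ)) (hchar : (2 : Kbar) ≠ 0)
    (hres : ResidueAlgClosed v)
    (hsurj : ∀ b : ℚ, ∃ β : Kbar, β ≠ 0 ∧ v β = (b : WithTop ℚ))
    (h : Kbar[X]) (hdeg : 1 ≤ h.natDegree)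
    (hroots : ∀ x ∈ h.roots, v x ≤ 0)
    (dO : ℕ) (hdO₁ : Odd dO) (hdO₂ : dO ≤ h.natDegree)
    (hdO₃ : ∀ m : ℕ, Odd m → m ≤ h.natDegree → m ≤ dO) :
    -- (i)
    (∀ b t : ℚ, 0 ≤ b → TVal v h.roots (0 : Kbar) b t →
      0 ≤ t ∧ (t : WithTop ℚ) ≤ v 2 + v 2) ∧
    (∀ b b' t t' : ℚ, 0 ≤ b → b ≤ b' →
      TVal v h.roots (0 : Kbar) b t → TVal v h.roots (0 : Kbar) b' t' → t ≤ t') ∧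
    -- (ii)
    (∀ b b' t t' : ℚ, 0 ≤ b → b ≤ b' →
      TVal v h.roots (0 : Kbar) b t → TVal v h.roots (0 : Kbar) b' t' →
      min ((t + (b' - b) : ℚ) : WithTop ℚ) (v 2 + v 2) ≤ (t' : WithTop ℚ) ∧
      (t' : WithTop ℚ) ≤ min ((t + (dO : ℚ) * (b' - b) : ℚ) : WithTop ℚ) (v 2 + v 2)) ∧
    -- (iii)
    (∃ B : ℚ, ∀ b t : ℚ, B ≤ b → TVal v h.roots (0 : Kbar) b t →
      (t : WithTop ℚ) = v 2 + v 2) ∧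
    -- (iv)
    (∀ b t t₀ : ℚ, 0 ≤ b → TVal v h.roots (0 : Kbar) b t →
      TVal v h.roots (0 : Kbar) 0 t₀ → (t : WithTop ℚ) = v 2 + v 2 →
      v 2 + v 2 ≤ ((t₀ + (dO : ℚ) * b : ℚ) : WithTop ℚ)) ∧
    (∃ b t : ℚ, 0 ≤ b ∧ (b : WithTop ℚ) ≤ v 2 + v 2 ∧
      TVal v h.roots (0 : Kbar) b t ∧ (t : WithTop ℚ) = v 2 + v 2) := by
  classical
  obtain ⟨ρ, hodd, hρ, hkey⟩ := key v hchar h.roots hroots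
  have h0 := (rootsPoly_coeff v h.roots hroots).1
  have hcard : Multiset.card h.roots ≤ h.natDegree := card_roots' h
  obtain ⟨c, hc⟩ := WithTop.ne_top_iff_exists.1 ((AddValuation.ne_top_iff v).2 h0)
  obtain ⟨w, hw⟩ := WithTop.ne_top_iff_exists.1 ((AddValuation.ne_top_iff v).2 hchar)
  have hw0 : 0 ≤ w := by
    have := two_nonneg v
    rw [← hw] at this
    exact_mod_cast this
  have hr : ∀ i, ∃ r : ℚ, ρ.coeff i ≠ 0 → v (ρ.coeff i) = (r : WithTop ℚ) := by
    intro i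
    by_cases hi : ρ.coeff i = 0
    · exact ⟨0, fun h => absurd hi h⟩
    · obtain ⟨r, hr⟩ := WithTop.ne_top_iff_exists.1 ((AddValuation.ne_top_iff v).2 hi)
      exact ⟨r, fun _ => hr.symm⟩
  choose r hr using hr
  have hcr : ∀ i ∈ ρ.support, c ≤ r i ∧ 1 ≤ (i : ℚ) ∧ (i : ℚ) ≤ dO := by
    intro i hi
    have hi' := mem_support_iff.1 hi
    have h1 := hρ i
    rw [← hc, hr i hi'] at h1
    obtain ⟨ho, hle⟩ := hodd i hi'
    refine ⟨by exact_mod_cast h1, ?_, ?_⟩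
    · exact_mod_cast ho.pos
    · exact_mod_cast hdO₃ i ho (hle.trans hcard)
  have hvb : ∀ b : ℚ, vb v b ρ = ρ.support.inf fun i => ((r i + i * b : ℚ) : WithTop ℚ) := by
    intro b
    unfold vb
    refine Finset.inf_congr rfl fun i hi => ?_
    rw [hr i (mem_support_iff.1 hi), ← WithTop.coe_add]
  have hww : v 2 + v 2 = ((2 * w : ℚ) : WithTop ℚ) := by
    rw [← hw, ← WithTop.coe_add, two_mul]
  -- the description of `φ`
  have A : ∀ b t : ℚ, 0 ≤ b → TVal v h.roots (0 : Kbar) b t →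
      t ≤ 2 * w ∧ (∀ i ∈ ρ.support, c + t ≤ r i + i * b) ∧
        (t = 2 * w ∨ ∃ i ∈ ρ.support, c + t = r i + i * b) := by
    rintro b t hb ⟨β, hβ0, hβ, hlub⟩
    obtain ⟨hg, hl⟩ := hkey b hb β hβ0 hβ
    have e := hlub.unique hl
    rw [hg, ← hc, hww, hvb, ← WithTop.coe_add, ← WithTop.coe_add] at e
    have e1 := e.le.trans (min_le_left _ _)
    have e2 := e.le.trans (min_le_right _ _)
    rw [Finset.le_inf_iff] at e2
    refine ⟨?_, ?_, ?_⟩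
    · have := WithTop.coe_le_coe.1 e1
      linarith
    · intro i hi
      exact WithTop.coe_le_coe.1 (e2 i hi)
    · rcases min_choice ((c + 2 * w : ℚ) : WithTop ℚ)
        (ρ.support.inf fun i => ((r i + i * b : ℚ) : WithTop ℚ)) with hm | hm
      · rw [hm] at e
        have := WithTop.coe_inj.1 e
        left; linarith
      · rw [hm] at e
        right
        have hne : ρ.support.Nonempty := by
          rw [Finset.nonempty_iff_ne_empty]
          intro hempty
          rw [hempty, Finset.inf_empty] at e
          exact WithTop.coe_ne_top e
        obtain ⟨i, hi, hie⟩ := Finset.exists_mem_eq_inf ρ.support hne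
          (fun i => ((r i + i * b : ℚ) : WithTop ℚ))
        rw [hie] at e
        exact ⟨i, hi, WithTop.coe_inj.1 e⟩
  have B : ∀ b t : ℚ, 2 * w ≤ b → TVal v h.roots (0 : Kbar) b t → t = 2 * w := by
    intro b t hb ht
    obtain ⟨a1, a2, a3⟩ := A b t (by linarith) ht
    rcases a3 with a3 | ⟨i, hi, a3⟩
    · exact a3
    · obtain ⟨c1, c2, _⟩ := hcr i hi
      nlinarith
  have I : ∀ b t : ℚ, 0 ≤ b → TVal v h.roots (0 : Kbar) b t → 0 ≤ t ∧ t ≤ 2 * w := by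
    intro b t hb ht
    obtain ⟨a1, a2, a3⟩ := A b t hb ht
    refine ⟨?_, a1⟩
    rcases a3 with a3 | ⟨i, hi, a3⟩
    · linarith
    · obtain ⟨c1, c2, _⟩ := hcr i hi
      nlinarith
  have II : ∀ b b' t t' : ℚ, 0 ≤ b → b ≤ b' →
      TVal v h.roots (0 : Kbar) b t → TVal v h.roots (0 : Kbar) b' t' →
      (t + (b' - b) ≤ t' ∨ 2 * w ≤ t') ∧ t' ≤ t + dO * (b' - b) := by
    intro b b' t t' hb hbb ht ht'
    obtain ⟨a1, a2, a3⟩ := A b t hb ht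
    obtain ⟨a1', a2', a3'⟩ := A b' t' (hb.trans hbb) ht'
    constructor
    · rcases a3' with a3' | ⟨i, hi, a3'⟩
      · right; exact a3'.ge
      · left
        obtain ⟨c1, c2, _⟩ := hcr i hi
        have := a2 i hi
        nlinarith
    · rcases a3 with a3 | ⟨i, hi, a3⟩
      · have : 0 ≤ (dO : ℚ) * (b' - b) := mul_nonneg (by positivity) (by linarith)
        linarith
      · obtain ⟨c1, _, c2⟩ := hcr i hi
        have := a2' i hi
        nlinarith
  rw [hww]
  refine ⟨?_, ?_, ?_, ?_, ?_, ?_⟩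
  · intro b t hb ht
    obtain ⟨h1, h2⟩ := I b t hb ht
    exact ⟨h1, by exact_mod_cast h2⟩
  · intro b b' t t' hb hbb ht ht'
    have h1 := (II b b' t t' hb hbb ht ht').1
    have h2 := (I b t hb ht).2
    rcases h1 with h1 | h1 <;> linarith
  · intro b b' t t' hb hbb ht ht'
    obtain ⟨h1, h2⟩ := II b b' t t' hb hbb ht ht'
    have h3 := (I b' t' (hb.trans hbb) ht').2
    refine ⟨?_, le_min (WithTop.coe_le_coe.2 h2) (WithTop.coe_le_coe.2 h3)⟩
    rcases h1 with h1 | h1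
    · exact (min_le_left _ _).trans (WithTop.coe_le_coe.2 h1)
    · exact (min_le_right _ _).trans (WithTop.coe_le_coe.2 h1)
  · exact ⟨2 * w, fun b t hb ht => by rw [B b t hb ht]⟩
  · intro b t t₀ hb ht ht₀ hte
    have h1 := (II 0 b t₀ t le_rfl hb ht₀ ht).2
    have h2 := WithTop.coe_inj.1 hte
    apply WithTop.coe_le_coe.2
    rw [sub_zero] at h1
    linarith
  · refine ⟨2 * w, 2 * w, by linarith, le_rfl, ?_, rfl⟩
    obtain ⟨β, hβ0, hβ⟩ := hsurj (2 * w)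
    refine ⟨β, hβ0, hβ, ?_⟩
    obtain ⟨hg, hl⟩ := hkey (2 * w) (by linarith) β hβ0 hβ
    convert hl using 1
    rw [hg, hww]
    symm
    apply min_eq_left
    rw [hvb, Finset.le_inf_iff, ← hc, ← WithTop.coe_add]
    intro i hi
    obtain ⟨c1, c2, _⟩ := hcr i hi
    apply WithTop.coe_le_coe.2
    nlinarith
end

section
/- Let 𝔰 ⊂ K̄ be a finite set of even cardinality at least 2 and set d := min{v(a − a′) : a, a′ ∈ 𝔰, a ≠ a′}. Suppose 𝔰 is the disjoint union of nonempty subsets c₁, …, c_N with N ≥ 2, each of even cardinality, such that v(a − a′) = d whenever a ∈ c_i and a′ ∈ c_j with i ≠ j. Let α ∈ 𝔰. Then the minimum of the N + 1 quantities 𝔱^{c₁}(α,d), …, 𝔱^{c_N}(α,d), 𝔱^{𝔰}(α,d) is attained by at least two of them. In particular, if 𝔱^{c_i}(α,d) = 2v(2) for all i, then also 𝔱^{𝔰}(α,d) = 2v(2). -/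
open Polynomial

/-- There is a part-square decomposition whose remainder has Gauss valuation `> c`. -/
def HasDec {Kbar : Type*} [Field Kbar] (v : AddValuation Kbar (WithTop ℚ))
    (f : Kbar[X]) (c : ℚ) : Prop :=
  ∃ q ρ : Kbar[X], IsPSD f q ρ ∧ ∀ i, (c : WithTop ℚ) < v (ρ.coeff i)

section aux
variable {Kbar : Type*} [Field Kbar] (v : AddValuation Kbar (WithTop ℚ))

lemma exists_rat {x : Kbar} (hx : x ≠ 0) : ∃ r : ℚ, v x = (r : WithTop ℚ) := by
  have h : v x ≠ ⊤ := fun h => hx (v.top_iff.1 h)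
  exact ⟨(v x).untop h, (WithTop.coe_untop _ h).symm⟩

lemma lt_gauss (c : ℚ) (f : Kbar[X]) :
    (c : WithTop ℚ) < gaussVal v f ↔ ∀ i, (c : WithTop ℚ) < v (f.coeff i) := by
  unfold gaussVal
  rw [Finset.lt_inf_iff (WithTop.coe_lt_top c)]
  constructor
  · intro h i
    by_cases hi : f.coeff i = 0
    · rw [hi, v.map_zero]; exact WithTop.coe_lt_top c
    · exact h i (mem_support_iff.2 hi)
  · intro h i _; exact h i

lemma le_gauss (c : WithTop ℚ) (f : Kbar[X]) :
    c ≤ gaussVal v f ↔ ∀ i, c ≤ v (f.coeff i) := by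
  unfold gaussVal
  rw [Finset.le_inf_iff]
  constructor
  · intro h i
    by_cases hi : f.coeff i = 0
    · rw [hi, v.map_zero]; exact le_top
    · exact h i (mem_support_iff.2 hi)
  · intro h i _; exact h i

lemma lt_sub' {x y : Kbar} {c : WithTop ℚ} (hx : c < v x) (hy : c < v y) :
    c < v (x - y) := by
  rw [sub_eq_add_neg]
  exact v.map_lt_add hx (by rwa [v.map_neg])

lemma lt_sum {ι : Type*} (s : Finset ι) (f : ι → Kbar) (c : ℚ)
    (h : ∀ i ∈ s, (c : WithTop ℚ) < v (f i)) : (c : WithTop ℚ) < v (∑ i ∈ s, f i) :=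
  v.map_lt_sum (WithTop.coe_ne_top) h

lemma le_coeff_mul {A B : WithTop ℚ} {a b : Kbar[X]} (ha : ∀ i, A ≤ v (a.coeff i))
    (hb : ∀ i, B ≤ v (b.coeff i)) (i : ℕ) : A + B ≤ v ((a * b).coeff i) := by
  rw [coeff_mul]
  refine v.map_le_sum fun x _ => ?_
  rw [v.map_mul]
  exact add_le_add (ha _) (hb _)

lemma lt_coeff_mul {B : ℚ} {a b : Kbar[X]} (ha : ∀ i, 0 ≤ v (a.coeff i))
    (hb : ∀ i, (B : WithTop ℚ) < v (b.coeff i)) (i : ℕ) :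
    (B : WithTop ℚ) < v ((a * b).coeff i) := by
  rw [coeff_mul]
  refine lt_sum v _ _ _ fun x _ => ?_
  rw [v.map_mul]
  calc (B : WithTop ℚ) < v (b.coeff x.2) := hb _
    _ = 0 + v (b.coeff x.2) := (zero_add _).symm
    _ ≤ _ := by gcongr; exact ha _

lemma wadd_lt {A B : ℚ} {x y : WithTop ℚ} (hx : (A : WithTop ℚ) ≤ x)
    (hy : (B : WithTop ℚ) < y) : ((A + B : ℚ) : WithTop ℚ) < x + y := by
  induction x using WithTop.recTopCoe with
  | top => simp
  | coe x =>
    induction y using WithTop.recTopCoe with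
    | top => simp
    | coe y =>
      norm_cast at *
      linarith

/-- exact top coefficient of a product -/
lemma coeff_mul_exact {A B : ℚ} {a b : Kbar[X]} {m k : ℕ}
    (ham : v (a.coeff m) = (A : WithTop ℚ)) (ha : ∀ i, (A : WithTop ℚ) ≤ v (a.coeff i))
    (ha' : ∀ i, m < i → (A : WithTop ℚ) < v (a.coeff i))
    (hbk : v (b.coeff k) = (B : WithTop ℚ)) (hb : ∀ i, (B : WithTop ℚ) ≤ v (b.coeff i))
    (hb' : ∀ i, k < i → (B : WithTop ℚ) < v (b.coeff i)) :
    v ((a * b).coeff (m + k)) = ((A + B : ℚ) : WithTop ℚ) := by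
  rw [coeff_mul, ← Finset.add_sum_erase _ _ (a := (m, k)) (by simp)]
  have h1 : v (a.coeff m * b.coeff k) = ((A + B : ℚ) : WithTop ℚ) := by
    rw [v.map_mul, ham, hbk]; norm_cast
  have h2 : ((A + B : ℚ) : WithTop ℚ) <
      v (∑ x ∈ (Finset.HasAntidiagonal.antidiagonal (m + k)).erase (m, k), a.coeff x.1 * b.coeff x.2) := by
    refine lt_sum v _ _ _ fun x hx => ?_
    obtain ⟨i, j⟩ := x
    simp only [Finset.mem_erase, Finset.HasAntidiagonal.mem_antidiagonal, ne_eq, Prod.mk.injEq] at hx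
    rw [v.map_mul]
    rcases lt_or_ge k j with hj | hj
    · exact wadd_lt (ha i) (hb' j hj)
    · rw [add_comm A B, add_comm (v _)]
      exact wadd_lt (hb j) (ha' i (by omega))
  rw [v.map_add_eq_of_lt_left (by rw [h1]; exact h2), h1]

lemma exists_top {b : Kbar[X]} (hb : b ≠ 0) : ∃ (B : ℚ) (k : ℕ),
    v (b.coeff k) = (B : WithTop ℚ) ∧ (∀ i, (B : WithTop ℚ) ≤ v (b.coeff i)) ∧
    (∀ i, k < i → (B : WithTop ℚ) < v (b.coeff i)) := by
  classical
  obtain ⟨j, hj, hjm⟩ := Finset.exists_min_image b.support (fun i => v (b.coeff i))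
    (support_nonempty.2 hb)
  obtain ⟨B, hB⟩ := exists_rat v (mem_support_iff.1 hj)
  have hall : ∀ i, (B : WithTop ℚ) ≤ v (b.coeff i) := by
    intro i
    by_cases hi : b.coeff i = 0
    · rw [hi, v.map_zero]; exact le_top
    · rw [← hB]; exact hjm i (mem_support_iff.2 hi)
  obtain ⟨k, hk, hkm⟩ := Finset.exists_max_image
    (b.support.filter fun i => v (b.coeff i) = (B : WithTop ℚ)) id
    ⟨j, by simp only [Finset.mem_filter]; exact ⟨hj, hB⟩⟩
  rw [Finset.mem_filter] at hk
  refine ⟨B, k, hk.2, hall, fun i hi => lt_of_le_of_ne (hall i) fun h => ?_⟩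
  have : i ∈ b.support.filter fun i => v (b.coeff i) = (B : WithTop ℚ) := by
    rw [Finset.mem_filter]
    refine ⟨mem_support_iff.2 fun h0 => ?_, h.symm⟩
    rw [h0, v.map_zero] at h
    exact WithTop.coe_ne_top h
  have := hkm i this
  simp at this
  omega

lemma integral_of_sq {p : Kbar[X]} (h : ∀ i, 0 ≤ v ((p ^ 2).coeff i)) (i : ℕ) :
    0 ≤ v (p.coeff i) := by
  by_cases hp : p = 0
  · simp [hp]
  obtain ⟨B, k, h1, h2, h3⟩ := exists_top v hp
  have := coeff_mul_exact v h1 h2 h3 h1 h2 h3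
  rw [← pow_two] at this
  have h4 := h (k + k)
  rw [this] at h4
  norm_cast at h4
  refine le_trans ?_ (h2 i)
  norm_cast
  linarith

lemma integral_q {f q ρ : Kbar[X]} {r : ℚ} (hr : 0 ≤ r) (hf : ∀ i, 0 ≤ v (f.coeff i))
    (h : f = q ^ 2 + ρ) (hρ : ∀ i, (r : WithTop ℚ) < v (ρ.coeff i)) (i : ℕ) :
    0 ≤ v (q.coeff i) := by
  refine integral_of_sq v (fun i => ?_) i
  have : q ^ 2 = f - ρ := by rw [h]; ring
  rw [this, coeff_sub]
  refine v.map_le_sub (hf i) (le_trans ?_ (hρ i).le)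
  exact_mod_cast hr

lemma hasDec_mul {f g : Kbar[X]} {c : ℚ} (hc : 0 ≤ c) (hfm : f.Monic) (hgm : g.Monic)
    (hf : ∀ i, 0 ≤ v (f.coeff i)) (hg : ∀ i, 0 ≤ v (g.coeff i))
    (hfe : Even f.natDegree) (hge : Even g.natDegree)
    (h1 : HasDec v f c) (h2 : HasDec v g c) : HasDec v (f * g) c := by
  obtain ⟨q, ρ, ⟨e1, d1⟩, w1⟩ := h1
  obtain ⟨p, τ, ⟨e2, d2⟩, w2⟩ := h2
  have hq := integral_q v hc hf e1 w1
  refine ⟨q * p, q * (q * τ) + g * ρ, ⟨?_, ?_⟩, fun i => ?_⟩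
  · rw [e1]; linear_combination q ^ 2 * e2
  · rw [hfm.natDegree_mul hgm]
    have := natDegree_mul_le (p := q) (q := p)
    obtain ⟨a, ha⟩ := hfe
    obtain ⟨b, hb⟩ := hge
    omega
  · rw [coeff_add]
    exact v.map_lt_add (lt_coeff_mul v hq (lt_coeff_mul v hq w2) i) (lt_coeff_mul v hg w1 i)

lemma hasDec_prod {ι : Type*} (s : Finset ι) (F : ι → Kbar[X]) {c : ℚ} (hc : 0 ≤ c)
    (hm : ∀ i, (F i).Monic) (hi : ∀ i j, 0 ≤ v ((F i).coeff j))
    (he : ∀ i, Even (F i).natDegree) (hD : ∀ i ∈ s, HasDec v (F i) c) :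
    (∏ i ∈ s, F i).Monic ∧ (∀ j, 0 ≤ v ((∏ i ∈ s, F i).coeff j)) ∧
      Even (∏ i ∈ s, F i).natDegree ∧ HasDec v (∏ i ∈ s, F i) c := by
  classical
  induction s using Finset.induction_on with
  | empty =>
    refine ⟨by simp, fun j => ?_, by simp, 1, 0, ⟨by simp, by simp⟩, fun i => by simp⟩
    simp only [Finset.prod_empty, coeff_one]
    split_ifs <;> simp
  | insert a s ha ih =>
    obtain ⟨i1, i2, i3, i4⟩ := ih fun i hi => hD i (Finset.mem_insert_of_mem hi)
    rw [Finset.prod_insert ha]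
    refine ⟨(hm a).mul i1, fun j => ?_, ?_, hasDec_mul v hc (hm a) i1 (hi a) i2 (he a) i3
      (hD a (Finset.mem_insert_self _ _)) i4⟩
    · simpa using le_coeff_mul v (hi a) i2 j
    · rw [(hm a).natDegree_mul i1]; exact (he a).add i3

lemma hasDec_cancel {f g : Kbar[X]} {r V2 : ℚ} (hr : 0 ≤ r) (hV : v 2 = (V2 : WithTop ℚ))
    (hrV : r < V2 + V2) (hfm : f.Monic) (hgm : g.Monic)
    (hf : ∀ i, 0 ≤ v (f.coeff i)) (hg : ∀ i, 0 ≤ v (g.coeff i))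
    (hfe : Even f.natDegree) (hge : Even g.natDegree)
    (h1 : HasDec v g r) (h2 : HasDec v (f * g) r) : HasDec v f r := by
  obtain ⟨p, τ, ⟨e1, d1⟩, w1⟩ := h1
  obtain ⟨q, ρ, ⟨e2, d2⟩, w2⟩ := h2
  have hp := integral_q v hr hg e1 w1
  have hq := integral_q v hr (fun i => by simpa using le_coeff_mul v hf hg i) e2 w2
  rw [hfm.natDegree_mul hgm] at d2
  obtain ⟨a, ha⟩ := hfe
  obtain ⟨n, hn⟩ := hge
  -- leading coefficient of p
  have hpn : v (p.coeff n) = ((0 : ℚ) : WithTop ℚ) := by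
    have hc : (p ^ 2).coeff (2 * n) = p.coeff n ^ 2 :=
      coeff_pow_of_natDegree_le (by omega)
    have hg1 : g.coeff (2 * n) = 1 := by
      have := hgm.coeff_natDegree
      rwa [hn, ← two_mul] at this
    have hpe : p ^ 2 = g - τ := by rw [e1]; ring
    have h0 : v ((p ^ 2).coeff (2 * n)) = 0 := by
      rw [hpe, coeff_sub, hg1, v.map_sub_eq_of_lt_left, v.map_one]
      rw [v.map_one]
      refine lt_of_le_of_lt ?_ (w1 _)
      exact_mod_cast hr
    rw [hc, pow_two, v.map_mul] at h0
    have hne : p.coeff n ≠ 0 := by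
      intro h; rw [h, v.map_zero] at h0; simp at h0
    obtain ⟨z, hz⟩ := exists_rat v hne
    rw [hz] at h0 ⊢
    norm_cast at h0 ⊢
    linarith
  have hpn0 : p.coeff n ≠ 0 := by
    intro h; rw [h, v.map_zero] at hpn; exact WithTop.coe_ne_top hpn.symm
  have hpd : p.natDegree = n := le_antisymm (by omega) (le_natDegree_of_ne_zero hpn0)
  have hp0 : p ≠ 0 := by rintro rfl; simp at hpn0
  have hp' : ∀ i, n < i → ((0 : ℚ) : WithTop ℚ) < v (p.coeff i) := by
    intro i hi
    rw [coeff_eq_zero_of_natDegree_lt (by omega), v.map_zero]; exact WithTop.coe_lt_top _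
  have hpz : ∀ i, ((0 : ℚ) : WithTop ℚ) ≤ v (p.coeff i) := by exact_mod_cast hp
  obtain ⟨s, u, hsu, hu⟩ : ∃ s u : Kbar[X], q = p * s + u ∧ ∀ i, n ≤ i → u.coeff i = 0 := by
    refine ⟨q / p, q % p, (EuclideanDomain.div_add_mod q p).symm, fun i hi => ?_⟩
    refine coeff_eq_zero_of_degree_lt (lt_of_lt_of_le (EuclideanDomain.mod_lt q hp0) ?_)
    change p.degree ≤ _
    rw [degree_eq_natDegree hp0, hpd]
    exact_mod_cast hi
  have hsd : s.natDegree ≤ a := by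
    rw [natDegree_le_iff_coeff_eq_zero]
    by_contra! hcon
    obtain ⟨N, hN, hN0⟩ := hcon
    have h3 : a < s.natDegree := lt_of_lt_of_le hN (le_natDegree_of_ne_zero hN0)
    have h4 : q.coeff (n + s.natDegree) = 0 :=
      coeff_eq_zero_of_natDegree_lt (by omega)
    rw [hsu, coeff_add, hu _ (by omega), add_zero] at h4
    nth_rewrite 1 [← hpd] at h4
    rw [coeff_mul_degree_add_degree] at h4
    have hs0 : s ≠ 0 := by rintro rfl; simp at hN0
    exact mul_ne_zero (leadingCoeff_ne_zero.2 hp0) (leadingCoeff_ne_zero.2 hs0) h4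
  have hs : ∀ i, 0 ≤ v (s.coeff i) := by
    intro i
    by_cases hs0 : s = 0
    · simp [hs0]
    obtain ⟨B, k, b1, b2, b3⟩ := exists_top v hs0
    have h5 := coeff_mul_exact v hpn hpz hp' b1 b2 b3
    have h6 := hq (n + k)
    rw [hsu, coeff_add, hu _ (by omega), add_zero, h5] at h6
    norm_cast at h6
    refine le_trans ?_ (b2 i)
    norm_cast
    linarith
  refine ⟨s, f - s ^ 2, ⟨by ring, by omega⟩, ?_⟩
  by_contra hcon
  set σ := f - s ^ 2 with hσ
  have hσ0 : σ ≠ 0 := by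
    intro h; rw [h] at hcon; simp at hcon
  obtain ⟨r', m, m1, m2, m3⟩ := exists_top v hσ0
  have hr' : r' ≤ r := by
    by_contra! h
    refine hcon fun i => lt_of_lt_of_le ?_ (m2 i)
    exact_mod_cast h
  set E := ρ - f * τ with hE
  have hEw : ∀ i, (r : WithTop ℚ) < v (E.coeff i) := by
    intro i
    rw [hE, coeff_sub]
    exact lt_sub' v (w2 i) (lt_coeff_mul v hf w1 i)
  have key : p * (p * σ) = u ^ 2 + C 2 * (p * s * u) + E := by
    have e3 : f * (p ^ 2 + τ) = (p * s + u) ^ 2 + ρ := by rw [← e1, ← hsu]; exact e2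
    have : (C 2 : Kbar[X]) = 2 := map_ofNat C 2
    rw [this, hσ, hE]
    linear_combination e3
  -- leading coefficient of p^2 σ
  have t1 := coeff_mul_exact v hpn hpz hp' m1 m2 m3
  have hpp : v ((p * p).coeff (n + n)) = ((0 + 0 : ℚ) : WithTop ℚ) :=
    coeff_mul_exact v hpn hpz hp' hpn hpz hp'
  have hppi : ∀ i, ((0 + 0 : ℚ) : WithTop ℚ) ≤ v ((p * p).coeff i) := by
    intro i; simpa using le_coeff_mul v hp hp i
  have hppd : ∀ i, n + n < i → ((0 + 0 : ℚ) : WithTop ℚ) < v ((p * p).coeff i) := by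
    intro i hi
    rw [coeff_eq_zero_of_natDegree_lt, v.map_zero]
    · exact WithTop.coe_lt_top _
    · have := natDegree_mul_le (p := p) (q := p)
      omega
  have top := coeff_mul_exact v hpp hppi hppd m1 m2 m3
  rw [mul_assoc, key] at top
  have hu2 : (u ^ 2).coeff (n + n + m) = 0 := by
    rw [pow_two, coeff_mul]
    refine Finset.sum_eq_zero fun x hx => ?_
    rw [Finset.HasAntidiagonal.mem_antidiagonal] at hx
    rcases le_or_gt n x.1 with h | h
    · rw [hu _ h, zero_mul]
    · rw [hu x.2 (by omega), mul_zero]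
  rw [coeff_add, coeff_add, hu2, zero_add] at top
  have hps : ∀ i, 0 ≤ v ((p * s).coeff i) := fun i => by simpa using le_coeff_mul v hp hs i
  -- main contradiction
  have fin1 : ¬ ∀ i, (r' : WithTop ℚ) < v ((C 2 * (p * s * u)).coeff i) := by
    intro h
    have : (r' : WithTop ℚ) < v ((C 2 * (p * s * u)).coeff (n + n + m) + E.coeff (n + n + m)) := by
      refine v.map_lt_add (h _) (lt_of_le_of_lt ?_ (hEw _))
      exact_mod_cast hr'
    rw [top, zero_add, zero_add] at this
    exact lt_irrefl _ this
  by_cases hu0 : u = 0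
  · apply fin1
    intro i; simp [hu0]
  obtain ⟨e, k, k1, k2, k3⟩ := exists_top v hu0
  have hbound : ∀ i, ((V2 + e : ℚ) : WithTop ℚ) ≤ v ((C 2 * (p * s * u)).coeff i) := by
    intro i
    rw [coeff_C_mul, v.map_mul, hV, WithTop.coe_add]
    gcongr
    simpa using le_coeff_mul v hps k2 i
  have hle : V2 + e ≤ r' := by
    by_contra! h
    exact fin1 fun i => lt_of_lt_of_le (by exact_mod_cast h) (hbound i)
  have sq := coeff_mul_exact v k1 k2 k3 k1 k2 k3
  have hsq : u * u = p * (p * σ) - C 2 * (p * s * u) - E := by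
    rw [key]; ring
  rw [hsq, coeff_sub, coeff_sub] at sq
  have : ((e + e : ℚ) : WithTop ℚ) < v ((p * (p * σ)).coeff (k + k) -
      (C 2 * (p * s * u)).coeff (k + k) - E.coeff (k + k)) := by
    refine lt_sub' v (lt_sub' v ?_ ?_) ?_
    · have : (r' : WithTop ℚ) ≤ v ((p * (p * σ)).coeff (k + k)) := by
        have := le_coeff_mul v hp (fun i => le_coeff_mul v hp m2 i) (k + k)
        simpa using this
      refine lt_of_lt_of_le ?_ this
      norm_cast; linarith
    · refine lt_of_lt_of_le ?_ (hbound _)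
      norm_cast; linarith
    · refine lt_trans ?_ (hEw _)
      norm_cast; linarith
  rw [sq] at this
  exact lt_irrefl _ this

/-- rescaling -/
noncomputable def rescale (γ u : Kbar) (h : Kbar[X]) : Kbar[X] :=
  C (γ ^ 2) * h.comp (C u * X)

lemma rescale_coeff (γ u : Kbar) (h : Kbar[X]) (i : ℕ) :
    (rescale γ u h).coeff i = γ ^ 2 * (h.coeff i * u ^ i) := by
  rw [rescale, coeff_C_mul, comp_C_mul_X_coeff]

lemma rescale_val {γ u : Kbar} {g : ℚ} (hγ : v γ = (g : WithTop ℚ)) (hu : v u = 0)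
    (h : Kbar[X]) (i : ℕ) :
    v ((rescale γ u h).coeff i) = ((g + g : ℚ) : WithTop ℚ) + v (h.coeff i) := by
  rw [rescale_coeff, v.map_mul, v.map_mul, v.map_pow, v.map_pow, hu, hγ]
  simp [two_nsmul]

lemma isPSD_rescale {γ u : Kbar} (hγ : γ ≠ 0) (hu : u ≠ 0) {h q ρ : Kbar[X]}
    (H : IsPSD h q ρ) : IsPSD (rescale γ u h) (C γ * q.comp (C u * X)) (rescale γ u ρ) := by
  obtain ⟨h1, h2⟩ := H
  refine ⟨?_, ?_⟩
  · simp only [rescale]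
    nth_rewrite 1 [h1]
    simp only [add_comp, pow_comp, C_pow]
    ring
  · rw [rescale, natDegree_C_mul hγ, natDegree_C_mul (pow_ne_zero 2 hγ), natDegree_comp,
      natDegree_comp, natDegree_C_mul_X _ hu]
    simpa using h2

lemma rescale_rescale {γ u : Kbar} (hγ : γ ≠ 0) (hu : u ≠ 0) (h : Kbar[X]) :
    rescale γ⁻¹ u⁻¹ (rescale γ u h) = h := by
  ext i
  rw [rescale_coeff, rescale_coeff]
  rw [inv_pow, inv_pow]
  have := pow_ne_zero i hu
  field_simp

lemma tval_main {S : Multiset Kbar} {α β0 : Kbar} {d t V2 : ℚ} (hV : v 2 = (V2 : WithTop ℚ))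
    (hβ0 : β0 ≠ 0) (hvβ0 : v β0 = (d : WithTop ℚ)) (hS : Even (Multiset.card S))
    (f : Kbar[X]) (hfdef : f = rootsPoly (S.map fun a => (a - α) / β0))
    (hfm : f.Monic) (hf : ∀ i, 0 ≤ v (f.coeff i))
    (hT : TVal v S α d t) :
    0 ≤ t ∧ t ≤ V2 + V2 ∧ (∀ c : ℚ, c < t → HasDec v f c) ∧
      (∀ c : ℚ, c < V2 + V2 → HasDec v f c → c < t) := by
  obtain ⟨β, hβ, hvβ, hlub⟩ := hT
  set h := (rootsPoly S).comp (C β * X + C α) with hh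
  obtain ⟨k, hk⟩ := hS
  set γ := (β0 ^ k)⁻¹ with hγd
  set u := β0 / β with hud
  have hγ : γ ≠ 0 := inv_ne_zero (pow_ne_zero _ hβ0)
  have hu : u ≠ 0 := div_ne_zero hβ0 hβ
  have hvu : v u = 0 := by
    rw [hud, v.map_div, hvβ, hvβ0]; norm_cast; simp
  have hfh : f = rescale γ u h := by
    have hγ2 : γ ^ 2 = (β0⁻¹) ^ (Multiset.card S) := by
      rw [hk, hγd, ← two_mul, mul_comm 2 k, pow_mul, inv_pow, inv_pow, inv_pow]
    rw [rescale, hγ2, hh, hfdef, comp_assoc]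
    have : (C β * X + C α : Kbar[X]).comp (C u * X) = C β0 * X + C α := by
      simp only [add_comp, mul_comp, C_comp, X_comp]
      rw [← mul_assoc, ← C_mul, hud, mul_div_cancel₀ _ hβ]
    rw [this]
    clear * - hβ0
    induction S using Multiset.induction_on with
    | empty => simp [rootsPoly]
    | cons a S ih =>
      simp only [rootsPoly, Multiset.map_cons, Multiset.prod_cons, Multiset.card_cons,
        mul_comp] at ih ⊢
      rw [ih, pow_succ, C_mul]
      have : (X - C ((a - α) / β0) : Kbar[X]) =
          C β0⁻¹ * (X - C a : Kbar[X]).comp (C β0 * X + C α) := by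
        simp only [sub_comp, X_comp, C_comp]
        rw [div_eq_inv_mul, C_mul, C_sub]
        have : (C β0⁻¹ * C β0 : Kbar[X]) = 1 := by
          rw [← C_mul, inv_mul_cancel₀ hβ0, C_1]
        linear_combination (-X) * this
      rw [this]; ring
  obtain ⟨g, hg⟩ := exists_rat v hγ
  have hval : ∀ i, v (f.coeff i) = ((g + g : ℚ) : WithTop ℚ) + v (h.coeff i) := by
    intro i; rw [hfh]; exact rescale_val v hg hvu h i
  have hhf : h = rescale γ⁻¹ u⁻¹ f := by rw [hfh, rescale_rescale hγ hu]
  have hginv : v γ⁻¹ = ((-g : ℚ) : WithTop ℚ) := by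
    rw [v.map_inv, hg]; norm_cast
  have huinv : v u⁻¹ = 0 := by
    rw [v.map_inv, hvu]; norm_cast
  have hval' : ∀ (P : Kbar[X]) i, v ((rescale γ⁻¹ u⁻¹ P).coeff i) =
      ((-g + -g : ℚ) : WithTop ℚ) + v (P.coeff i) :=
    fun P i => rescale_val v hginv huinv P i
  set H : ℚ := -g + -g with hH
  have hgauss : gaussVal v h = (H : WithTop ℚ) := by
    apply le_antisymm
    · have := (le_gauss v (gaussVal v h) h).1 le_rfl f.natDegree
      rw [hhf, hval', hfm.coeff_natDegree, v.map_one, add_zero] at this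
      rwa [← hhf] at this
    · rw [le_gauss]
      intro i
      rw [hhf, hval']
      exact le_add_of_nonneg_right (hf i)
  rw [hgauss, hV] at hlub
  refine ⟨?_, ?_, ?_, ?_⟩
  · have hmem := hlub.1 ⟨0, h, ⟨by ring, by simp⟩, rfl⟩
    have hV2 : 0 ≤ V2 := by
      have : 0 ≤ v (2 : Kbar) := by
        have := v.map_add 1 1
        rw [one_add_one_eq_two, v.map_one, min_self] at this
        exact this
      rw [hV] at this; exact_mod_cast this
    rw [hgauss] at hmem
    norm_cast at hmem
    rw [min_eq_right (by linarith)] at hmem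
    linarith
  · have : (H : WithTop ℚ) + (t : WithTop ℚ) ≤ (H : WithTop ℚ) + ((V2 : WithTop ℚ) + V2) := by
      apply hlub.2
      rintro x ⟨q, ρ, _, rfl⟩
      exact min_le_left _ _
    norm_cast at this
    linarith
  · intro c hc
    have : ((H + c : ℚ) : WithTop ℚ) < (H : WithTop ℚ) + (t : WithTop ℚ) := by
      norm_cast; linarith
    rw [lt_isLUB_iff hlub] at this
    obtain ⟨x, ⟨q, ρ, hpsd, rfl⟩, hx⟩ := this
    have hx2 := (lt_gauss v _ _).1 (lt_of_lt_of_le hx (min_le_right _ _))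
    refine ⟨_, _, hfh ▸ isPSD_rescale hγ hu hpsd, fun i => ?_⟩
    rw [rescale_val v hg hvu]
    have := wadd_lt (le_refl ((g + g : ℚ) : WithTop ℚ)) (hx2 i)
    have e : g + g + (H + c) = c := by rw [hH]; ring
    rwa [e] at this
  · rintro c hc ⟨q, ρ, hpsd, hρ⟩
    have hpsd' := isPSD_rescale (inv_ne_zero hγ) (inv_ne_zero hu) hpsd
    rw [← hhf] at hpsd'
    have hmem := hlub.1 ⟨_, _, hpsd', rfl⟩
    have : ((H + c : ℚ) : WithTop ℚ) < (H : WithTop ℚ) + (t : WithTop ℚ) := by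
      refine lt_of_lt_of_le (lt_min ?_ ?_) hmem
      · norm_cast; linarith
      · rw [lt_gauss]
        intro i
        rw [hval']
        exact wadd_lt le_rfl (hρ i)
    norm_cast at this
    linarith

lemma rootsPoly_integral (S : Multiset Kbar) (hS : ∀ a ∈ S, 0 ≤ v a) :
    (rootsPoly S).Monic ∧ (∀ i, 0 ≤ v ((rootsPoly S).coeff i)) ∧
      (rootsPoly S).natDegree = Multiset.card S := by
  refine ⟨monic_multisetProd_X_sub_C S, ?_, natDegree_multiset_prod_X_sub_C_eq_card S⟩
  induction S using Multiset.induction_on with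
  | empty =>
    intro i
    simp only [rootsPoly, Multiset.map_zero, Multiset.prod_zero, coeff_one]
    split_ifs <;> simp
  | cons a S ih =>
    intro i
    have h1 := ih fun b hb => hS b (Multiset.mem_cons_of_mem hb)
    have h2 : ∀ i, 0 ≤ v ((X - C a : Kbar[X]).coeff i) := by
      intro i
      rw [coeff_sub, coeff_X, coeff_C]
      refine v.map_le_sub ?_ ?_
      · split_ifs <;> simp
      · split_ifs
        · exact hS a (Multiset.mem_cons_self _ _)
        · simp
    have := le_coeff_mul v h2 h1 i
    simpa [rootsPoly] using this

end aux

/-- Let `𝔰` be a finite set of even cardinality `≥ 2`, `d` the minimum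
of `v (a − a')` over distinct `a, a' ∈ 𝔰`, and suppose `𝔰` is the disjoint union of
nonempty even-cardinality subsets `c₁, …, c_N` (`N ≥ 2`) with `v (a − a') = d` for `a, a'`
in different parts.  Then for `α ∈ 𝔰`, the minimum of the `N + 1` quantities
`𝔱^{cᵢ}(α,d)` and `𝔱^𝔰(α,d)` is attained at least twice; in particular if all
`𝔱^{cᵢ}(α,d) = 2 v 2` then also `𝔱^𝔰(α,d) = 2 v 2`. -/
theorem stmt13 {Kbar : Type*} [Field Kbar] [IsAlgClosed Kbar]
    (v : AddValuation Kbar (WithTop ℚ)) (hchar : (2 : Kbar) ≠ 0)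
    (hres : ResidueAlgClosed v)
    (hsurj : ∀ b : ℚ, ∃ β : Kbar, β ≠ 0 ∧ v β = (b : WithTop ℚ))
    (𝔰 : Finset Kbar) (heven : Even 𝔰.card) (hcard : 2 ≤ 𝔰.card)
    (d : ℚ)
    (hd_lb : ∀ a ∈ 𝔰, ∀ a' ∈ 𝔰, a ≠ a' → (d : WithTop ℚ) ≤ v (a - a'))
    (hd_att : ∃ a ∈ 𝔰, ∃ a' ∈ 𝔰, a ≠ a' ∧ v (a - a') = (d : WithTop ℚ))
    (N : ℕ) (hN : 2 ≤ N) (cs : Fin N → Finset Kbar)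
    (hcs_ne : ∀ i, (cs i).Nonempty)
    (hcs_even : ∀ i, Even (cs i).card)
    (hpart : 𝔰.val = ∑ i, (cs i).val)
    (hcross : ∀ i j, i ≠ j → ∀ a ∈ cs i, ∀ a' ∈ cs j, v (a - a') = (d : WithTop ℚ))
    (α : Kbar) (hα : α ∈ 𝔰) :
    ∀ (t : ℚ) (ts : Fin N → ℚ),
      TVal v 𝔰.val α d t → (∀ i, TVal v (cs i).val α d (ts i)) →
      (∃ i, ts i ≤ t ∧ (∀ j, ts i ≤ ts j) ∧
        (ts i = t ∨ ∃ j, j ≠ i ∧ ts j = ts i)) ∧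
      ((∀ i, (ts i : WithTop ℚ) = v 2 + v 2) → (t : WithTop ℚ) = v 2 + v 2) := by
  intro t ts hT hTs
  classical
  obtain ⟨V2, hV⟩ := exists_rat v hchar
  obtain ⟨β0, hβ0, hvβ0⟩ := hsurj d
  have hint : ∀ a ∈ 𝔰, 0 ≤ v ((a - α) / β0) := by
    intro a ha
    by_cases h : a = α
    · simp [h]
    have h1 := hd_lb a ha α hα h
    obtain ⟨z, hz⟩ := exists_rat v (sub_ne_zero.2 h)
    rw [v.map_div, hvβ0, hz]
    rw [hz] at h1
    norm_cast at h1 ⊢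
    linarith
  have hsub : ∀ i, ∀ a ∈ cs i, a ∈ 𝔰 := by
    intro i a ha
    rw [← Finset.mem_val, hpart, Multiset.mem_sum]
    exact ⟨i, Finset.mem_univ _, ha⟩
  set F : Fin N → Kbar[X] := fun i => rootsPoly ((cs i).val.map fun a => (a - α) / β0) with hF
  have hFi := fun i => rootsPoly_integral v ((cs i).val.map fun a => (a - α) / β0) (by
    intro b hb
    obtain ⟨a, ha, rfl⟩ := Multiset.mem_map.1 hb
    exact hint a (hsub i a ha))
  have hfi := rootsPoly_integral v (𝔰.val.map fun a => (a - α) / β0) (by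
    intro b hb
    obtain ⟨a, ha, rfl⟩ := Multiset.mem_map.1 hb
    exact hint a ha)
  set f := rootsPoly (𝔰.val.map fun a => (a - α) / β0) with hf
  have hprod : f = ∏ i, F i := by
    have gen : ∀ s : Finset (Fin N), rootsPoly ((∑ i ∈ s, (cs i).val).map fun a => (a - α) / β0)
        = ∏ i ∈ s, F i := by
      intro s
      induction s using Finset.induction_on with
      | empty => simp [rootsPoly]
      | insert a s ha ih =>
        rw [Finset.sum_insert ha, Finset.prod_insert ha, ← ih]
        simp [rootsPoly, hF]
    rw [hf, hpart]; exact gen _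
  have hFe : ∀ i, Even (F i).natDegree := by
    intro i
    rw [(hFi i).2.2, Multiset.card_map]; exact hcs_even i
  obtain ⟨t0, t1, t2, t3⟩ := tval_main v hV hβ0 hvβ0 heven f rfl hfi.1 hfi.2.1 hT
  have hs := fun i => tval_main v hV hβ0 hvβ0 (hcs_even i) (F i) rfl (hFi i).1 (hFi i).2.1 (hTs i)
  have hge : ∀ m : ℚ, (∀ i, m ≤ ts i) → m ≤ t := by
    intro m hm
    by_contra! hlt
    obtain ⟨c, hc1, hc2⟩ := exists_between hlt
    have hD := (hasDec_prod v Finset.univ F (c := c) (by linarith) (fun i => (hFi i).1)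
      (fun i => (hFi i).2.1) hFe (fun i _ => (hs i).2.2.1 c (lt_of_lt_of_le hc2 (hm i)))).2.2.2
    rw [← hprod] at hD
    have hi0 : Fin N := ⟨0, by omega⟩
    have := t3 c (by linarith [hm hi0, (hs hi0).2.1]) hD
    linarith
  constructor
  · obtain ⟨i, -, hi⟩ := Finset.exists_min_image (Finset.univ : Finset (Fin N)) ts
      ⟨⟨0, by omega⟩, Finset.mem_univ _⟩
    have hi' : ∀ j, ts i ≤ ts j := fun j => hi j (Finset.mem_univ _)
    refine ⟨i, hge _ hi', hi', ?_⟩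
    by_contra! hcon
    obtain ⟨hc1, hc2⟩ := hcon
    have hlt : ts i < t := lt_of_le_of_ne (hge _ hi') hc1
    have hG := hasDec_prod v (Finset.univ.erase i) F (c := ts i) (hs i).1 (fun i => (hFi i).1)
      (fun i => (hFi i).2.1) hFe (fun j hj => (hs j).2.2.1 _
        (lt_of_le_of_ne (hi' j) (hc2 j (Finset.ne_of_mem_erase hj)).symm))
    have hD := t2 _ hlt
    rw [hprod, ← Finset.mul_prod_erase _ _ (Finset.mem_univ i)] at hD
    have := hasDec_cancel v (hs i).1 hV (lt_of_lt_of_le hlt t1) (hFi i).1 hG.1 (hFi i).2.1 hG.2.1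
      (hFe i) hG.2.2.1 hG.2.2.2 hD
    exact lt_irrefl _ ((hs i).2.2.2 _ (lt_of_lt_of_le hlt t1) this)
  · intro hall
    rw [hV] at hall ⊢
    norm_cast at hall ⊢
    exact le_antisymm t1 (hge _ fun i => (hall i).ge)
end

section
/- Let f ∈ K̄[x] be a monic polynomial of degree ≥ 1 with multiset of roots R in K̄, and let α ∈ K̄ with f(α) ≠ 0. Set d₋ := max_{a ∈ R} v(a − α). Then for every rational b ≥ d₋ and every β ∈ K̄× with v(β) = b, the Gauss valuation of f(βz + α) equals Σ_{a ∈ R} v(a − α) (the sum taken with multiplicities). -/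
open Polynomial

theorem prod_aux {Kbar : Type*} [Field Kbar]
    (v : AddValuation Kbar (WithTop ℚ)) (α β : Kbar) (s : Multiset Kbar)
    (hs : ∀ a ∈ s, v (a - α) ≤ v β) :
    v ((s.map fun a => C β * X + C (α - a)).prod.coeff 0) = (s.map fun a => v (a - α)).sum ∧
    ∀ i, (s.map fun a => v (a - α)).sum ≤
      v ((s.map fun a => C β * X + C (α - a)).prod.coeff i) := by
  induction s using Multiset.induction_on with
  | empty =>
    refine ⟨by simp, fun i => ?_⟩
    rcases i with _ | i
    · simp
    · simp [coeff_one]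
  | cons a s ih =>
    obtain ⟨h0, h1⟩ := ih fun x hx => hs x (Multiset.mem_cons_of_mem hx)
    have ha : v (a - α) ≤ v β := hs a (Multiset.mem_cons_self a s)
    have hsw : v (α - a) = v (a - α) := AddValuation.map_sub_swap v α a
    simp only [Multiset.map_cons, Multiset.prod_cons, Multiset.sum_cons]
    generalize (s.map fun a => C β * X + C (α - a)).prod = Q at h0 h1 ⊢
    have e0 : v (((C β * X + C (α - a)) * Q).coeff 0) =
        v (a - α) + (s.map fun a => v (a - α)).sum := by
      rw [mul_coeff_zero, v.map_mul, h0]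
      simp [hsw]
    refine ⟨e0, fun i => ?_⟩
    rcases i with _ | i
    · exact e0.ge
    · have : ((C β * X + C (α - a)) * Q).coeff (i + 1) =
          β * Q.coeff i + (α - a) * Q.coeff (i + 1) := by
        rw [add_mul, mul_assoc, coeff_add, coeff_C_mul, coeff_X_mul, coeff_C_mul]
      rw [this]
      apply v.map_le_add
      · rw [v.map_mul]
        exact add_le_add ha (h1 i)
      · rw [v.map_mul, hsw]
        exact add_le_add le_rfl (h1 (i + 1))

/-- Let `f` be monic of degree `≥ 1` with multiset of roots `R`, and
`α` not a root.  Then for every rational `b ≥ d₋ := max_{a ∈ R} v (a − α)` and every `β`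
with `v β = b`, the Gauss valuation of `f(βz + α)` equals `∑_{a ∈ R} v (a − α)`. -/
theorem stmt15 {Kbar : Type*} [Field Kbar] [IsAlgClosed Kbar]
    (v : AddValuation Kbar (WithTop ℚ)) (hchar : (2 : Kbar) ≠ 0)
    (f : Kbar[X]) (hmonic : f.Monic) (hdeg : 1 ≤ f.natDegree)
    (α : Kbar) (hα : f.eval α ≠ 0)
    (b : ℚ) (hb : ∀ a ∈ f.roots, v (a - α) ≤ (b : WithTop ℚ))
    (β : Kbar) (hβ : β ≠ 0) (hvβ : v β = (b : WithTop ℚ)) :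
    gaussVal v (f.comp (C β * X + C α)) = (f.roots.map fun a => v (a - α)).sum := by
  have hf : f.comp (C β * X + C α) =
      (f.roots.map fun a => C β * X + C (α - a)).prod := by
    conv_lhs => rw [(IsAlgClosed.splits f).eq_prod_roots_of_monic hmonic]
    rw [multiset_prod_comp, Multiset.map_map]
    congr 1
    apply Multiset.map_congr rfl
    intro a _
    simp [add_sub_assoc]
  obtain ⟨h0, h1⟩ := prod_aux v α β f.roots (fun a ha => hvβ ▸ hb a ha)
  rw [← hf] at h0 h1
  have hc : (f.comp (C β * X + C α)).coeff 0 ≠ 0 := by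
    rw [coeff_zero_eq_eval_zero, eval_comp]
    simpa using hα
  unfold gaussVal
  apply le_antisymm
  · rw [← h0]
    exact Finset.inf_le (f := fun i => v ((f.comp (C β * X + C α)).coeff i))
      (mem_support_iff.mpr hc)
  · exact Finset.le_inf fun i _ => h1 i
end

section
/- Let K be a field of characteristic different from 2, let f ∈ K[x], and let Ω be an algebraic closure of the rational function field K(T). Suppose q, ρ ∈ Ω[z] satisfy f(z + T) = q(z)² + ρ(z), where every nonzero term of ρ has odd degree (a totally odd part-square decomposition of f(z+T) over Ω). Then every coefficient of q and every coefficient of ρ, regarded as elements of Ω, is integral over the polynomial ring K[T]. -/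
open Polynomial

theorem isIntegralElem_of_valuationSubring {R Ω : Type*} [CommRing R] [Field Ω] (φ : R →+* Ω)
    (x : Ω) (h : ∀ V : ValuationSubring Ω, (∀ r, φ r ∈ V) → x ∈ V) : φ.IsIntegralElem x := by
  letI := φ.toAlgebra
  change IsIntegral R x
  by_contra hx
  have hx' : x ∉ (integralClosure R Ω).toSubring := fun h => hx h
  haveI : IsIntegrallyClosedIn (integralClosure R Ω).toSubring Ω :=
    inferInstanceAs (IsIntegrallyClosedIn (integralClosure R Ω) Ω)
  obtain ⟨V, hV, hxV⟩ := Subring.exists_le_valuationSubring_of_isIntegrallyClosedIn hx'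
  refine hxV (h V fun r => hV ?_)
  exact (isIntegral_algebraMap : IsIntegral R (algebraMap R Ω r))

theorem coeff_mem_of_sq {Ω : Type*} [Field Ω] (V : ValuationSubring Ω) (q : Polynomial Ω)
    (h : ∀ m, (q ^ 2).coeff (2 * m) ∈ V) (i : ℕ) : q.coeff i ∈ V := by
  classical
  by_contra hi
  have hi1 : 1 < V.valuation (q.coeff i) := by
    rw [← not_le, V.valuation_le_one_iff]; exact hi
  have hi0 : i ∈ q.support := by
    rw [mem_support_iff]; intro h0; exact hi (h0 ▸ V.zero_mem)
  obtain ⟨k, hk, hkmax⟩ := q.support.exists_max_image (fun j => V.valuation (q.coeff j)) ⟨i, hi0⟩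
  obtain ⟨m, hm, hmmax⟩ := (q.support.filter
    (fun j => V.valuation (q.coeff j) = V.valuation (q.coeff k))).exists_max_image id
    ⟨k, by simp only [Finset.mem_filter]; exact ⟨hk, trivial⟩⟩
  simp only [Finset.mem_filter, id] at hm hmmax
  have hM1 : 1 < V.valuation (q.coeff m) := by
    rw [hm.2]; exact hi1.trans_le (hkmax i hi0)
  have hM0 : 0 < V.valuation (q.coeff m) := zero_lt_one.trans hM1
  have hle : ∀ j, V.valuation (q.coeff j) ≤ V.valuation (q.coeff m) := by
    intro j
    by_cases hj : j ∈ q.support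
    · rw [hm.2]; exact hkmax j hj
    · rw [notMem_support_iff.mp hj, map_zero]; exact zero_le
  have hlt : ∀ j, m < j → V.valuation (q.coeff j) < V.valuation (q.coeff m) := by
    intro j hj
    refine lt_of_le_of_ne (hle j) fun he => ?_
    by_cases hjs : j ∈ q.support
    · exact absurd (hmmax j ⟨hjs, he.trans hm.2⟩) (not_le.mpr hj)
    · rw [notMem_support_iff.mp hjs, map_zero] at he
      exact hM0.ne he
  have hmem : (m, m) ∈ Finset.HasAntidiagonal.antidiagonal (2 * m) := by
    rw [Finset.HasAntidiagonal.mem_antidiagonal]; omega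
  have hc := h m
  rw [pow_two, coeff_mul, ← Finset.add_sum_erase _ _ hmem, ← V.valuation_le_one_iff] at hc
  have hsum : V.valuation (∑ x ∈ (Finset.HasAntidiagonal.antidiagonal (2 * m)).erase (m, m),
      q.coeff x.1 * q.coeff x.2) < V.valuation (q.coeff m * q.coeff m) := by
    apply Valuation.map_sum_lt
    · rw [map_mul]; exact (mul_pos hM0 hM0).ne'
    · rintro ⟨a, b⟩ hab
      simp only [Finset.mem_erase, Finset.HasAntidiagonal.mem_antidiagonal, ne_eq, Prod.mk.injEq] at hab
      rw [map_mul, map_mul]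
      rcases lt_or_ge m a with ha | ha
      · exact mul_lt_mul_of_lt_of_le_of_nonneg_of_pos (hlt a ha) (hle b) zero_le hM0
      · have hb : m < b := by omega
        rw [mul_comm (V.valuation (q.coeff a))]
        exact mul_lt_mul_of_lt_of_le_of_nonneg_of_pos (hlt b hb) (hle a) zero_le hM0
  rw [Valuation.map_add_eq_of_lt_left _ hsum, map_mul] at hc
  exact absurd hc (not_le.mpr (one_lt_mul_of_lt_of_le hM1 hM1.le))


/-- Let `K` be a field of characteristic `≠ 2`, `f ∈ K[x]`, and `Ω` an
algebraic closure of the rational function field `K(T)`.  If `q, ρ ∈ Ω[z]` give a totally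
odd part-square decomposition `f(z + T) = q² + ρ` (with `deg q ≤ ⌈deg f(z+T)/2⌉` and every
nonzero term of `ρ` of odd degree), then every coefficient of `q` and of `ρ` is integral
over the polynomial ring `K[T]` (whose image in `Ω` is via `φ`). -/
theorem stmt17 (K : Type*) [Field K] (hchar : (2 : K) ≠ 0)
    (Ω : Type*) [Field Ω] [Algebra (RatFunc K) Ω] [IsAlgClosure (RatFunc K) Ω]
    (φ : Polynomial K →+* Ω)
    (hφ : φ = (algebraMap (RatFunc K) Ω).comp (algebraMap (Polynomial K) (RatFunc K)))
    (f : Polynomial K) (q ρ : Polynomial Ω)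
    (hdec : (f.map (φ.comp Polynomial.C)).comp (X + C (φ Polynomial.X)) = q ^ 2 + ρ)
    (hdeg : 2 * q.natDegree ≤
      ((f.map (φ.comp Polynomial.C)).comp (X + C (φ Polynomial.X))).natDegree + 1)
    (hodd : ∀ i : ℕ, Even i → ρ.coeff i = 0) :
    (∀ i, φ.IsIntegralElem (q.coeff i)) ∧ (∀ i, φ.IsIntegralElem (ρ.coeff i)) := by
  have hF : (f.map (φ.comp Polynomial.C)).comp (X + C (φ Polynomial.X)) =
      ((f.map Polynomial.C).comp (X + C Polynomial.X)).map φ := by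
    simp [Polynomial.map_comp, Polynomial.map_map]
  rw [hF] at hdec
  have key : ∀ V : ValuationSubring Ω, (∀ r, φ r ∈ V) → ∀ i, q.coeff i ∈ V := by
    intro V hV
    refine coeff_mem_of_sq V q fun m => ?_
    have h1 := congrArg (fun p => p.coeff (2 * m)) hdec
    simp only [coeff_add, coeff_map, hodd (2 * m) (even_two_mul m), add_zero] at h1
    rw [← h1]
    exact hV _
  refine ⟨fun i => isIntegralElem_of_valuationSubring φ _ fun V hV => key V hV i,
    fun i => isIntegralElem_of_valuationSubring φ _ fun V hV => ?_⟩
  have h1 : ρ.coeff i = φ (((f.map Polynomial.C).comp (X + C Polynomial.X)).coeff i)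
      - (q ^ 2).coeff i := by
    have := congrArg (fun p => p.coeff i) hdec
    simp only [coeff_add, coeff_map] at this
    rw [this]; ring
  rw [h1, pow_two, coeff_mul]
  exact sub_mem (hV _) (sum_mem fun x _ => mul_mem (key V hV _) (key V hV _))
end

section
/- Let K be a field of characteristic 0, K̄ an algebraic closure of K, and f ∈ K[x] a separable polynomial of degree ≥ 1. Fix a totally odd part-square decomposition f(z + T) = q_T(z)² + ρ_T(z) with q_T, ρ_T having coefficients in an algebraic closure of K(T) (such a decomposition exists), let R₁ be the coefficient of z in ρ_T, let L be a finite Galois extension of K(T) containing R₁, and set F(T) := ∏_{σ ∈ Gal(L/K(T))} σ(R₁). Then: (i) F is a nonzero element of the polynomial ring K[T]; and (ii) for every root α ∈ K̄ of F one has f(α) ≠ 0, and there exist q, ρ ∈ K̄[z] with f(z + α) = q² + ρ, deg q ≤ ⌈deg(f)/2⌉, every nonzero term of ρ of odd degree, and the coefficient of z in ρ equal to 0. -/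
open Polynomial

set_option synthInstance.maxHeartbeats 400000
set_option maxHeartbeats 800000

lemma aux_val {Ω : Type*} [Field Ω] (V : ValuationSubring Ω) (q : Polynomial Ω)
    (h : ∀ i, Even i → (q ^ 2).coeff i ∈ V) (i : ℕ) : q.coeff i ∈ V := by
  classical
  by_contra hi
  have hi0 : q.coeff i ≠ 0 := fun h0 => hi (h0 ▸ V.zero_mem)
  set v := V.valuation with hv
  have hmem : ∀ x, x ∈ V ↔ v x ≤ 1 := fun x => (V.valuation_le_one_iff x).symm
  obtain ⟨m0, hm0, hmax⟩ := Finset.exists_max_image q.support (fun j => v (q.coeff j))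
    ⟨i, mem_support_iff.2 hi0⟩
  have hmax' : ∀ j, v (q.coeff j) ≤ v (q.coeff m0) := by
    intro j
    by_cases hj : q.coeff j = 0
    · simp [hj]
    · exact hmax j (mem_support_iff.2 hj)
  obtain ⟨m, hm, hmm⟩ := Finset.exists_max_image
    (q.support.filter (fun j => v (q.coeff j) = v (q.coeff m0))) id
    ⟨m0, by simpa using hm0⟩
  rw [Finset.mem_filter] at hm
  have hgt : 1 < v (q.coeff m) := by
    rw [hm.2]
    exact lt_of_lt_of_le (not_le.1 (fun hh => hi ((hmem _).2 hh))) (hmax' i)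
  have hle : ∀ j, v (q.coeff j) ≤ v (q.coeff m) := fun j => hm.2 ▸ hmax' j
  have hlt : ∀ j, m < j → v (q.coeff j) < v (q.coeff m) := by
    intro j hj
    refine lt_of_le_of_ne (hle j) fun he => ?_
    by_cases hj0 : q.coeff j = 0
    · rw [hj0, map_zero] at he
      rw [← he] at hgt
      exact absurd hgt (by simp)
    · have := hmm j (Finset.mem_filter.2 ⟨mem_support_iff.2 hj0, he.trans hm.2⟩)
      simp at this; omega
  have hpos : 0 < v (q.coeff m) := lt_trans zero_lt_one hgt
  have hin := (hmem _).1 (h (2 * m) (even_two_mul m))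
  rw [pow_two, coeff_mul, ← Finset.add_sum_erase _ _
    (show (m, m) ∈ Finset.HasAntidiagonal.antidiagonal (2 * m) by simp; omega)] at hin
  have hs : v (∑ x ∈ (Finset.HasAntidiagonal.antidiagonal (2 * m)).erase (m, m), q.coeff x.1 * q.coeff x.2)
      < v (q.coeff m * q.coeff m) := by
    refine v.map_sum_lt' (by rw [map_mul]; exact mul_pos hpos hpos) ?_
    rintro ⟨a, b⟩ hab
    simp only [Finset.mem_erase, Finset.HasAntidiagonal.mem_antidiagonal, ne_eq, Prod.mk.injEq] at hab
    rw [map_mul, map_mul]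
    rcases lt_or_ge m a with ha | ha
    · exact (mul_le_mul' le_rfl (hle b)).trans_lt (mul_lt_mul_of_pos_right (hlt a ha) hpos)
    · exact (mul_le_mul' (hle a) le_rfl).trans_lt (mul_lt_mul_of_pos_left (hlt b (by omega)) hpos)
  rw [v.map_add_eq_of_lt_left hs, map_mul] at hin
  exact absurd hin (not_le.2 (one_lt_mul'' hgt hgt))

lemma aux_int {A Ω : Type*} [CommRing A] [Field Ω] [Algebra A Ω] (q : Polynomial Ω)
    (h : ∀ i, Even i → IsIntegral A ((q ^ 2).coeff i)) (i : ℕ) : IsIntegral A (q.coeff i) := by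
  by_contra hi
  have : IsIntegrallyClosedIn (integralClosure A Ω).toSubring Ω :=
    inferInstanceAs (IsIntegrallyClosedIn (integralClosure A Ω) Ω)
  obtain ⟨V, hV, hx⟩ := Subring.exists_le_valuationSubring_of_isIntegrallyClosedIn
    (R := (integralClosure A Ω).toSubring) (x := q.coeff i) hi
  exact hx (aux_val V q (fun j hj => hV (h j hj)) i)

lemma aux_ext {A B M : Type*} [CommRing A] [CommRing B] [Algebra A B] [Algebra.IsIntegral A B]
    [Field M] [IsAlgClosed M] (g : A →+* M) (hinj : Function.Injective (algebraMap A B)) :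
    ∃ ψ : B →+* M, ∀ a, ψ (algebraMap A B a) = g a := by
  have hp : (RingHom.ker g).IsPrime := RingHom.ker_isPrime g
  obtain ⟨Q, -, hQ, hQc⟩ := Ideal.exists_ideal_over_prime_of_isIntegral (RingHom.ker g) (⊥ : Ideal B)
    (by
      intro x hx
      have : algebraMap A B x = 0 := by simpa using hx
      rw [(injective_iff_map_eq_zero _).1 hinj x this]; exact zero_mem _)
  let j : A ⧸ RingHom.ker g →+* B ⧸ Q := Ideal.quotientMap Q (algebraMap A B) hQc.ge
  have hj : Function.Injective j := Ideal.quotientMap_injective' hQc.le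
  have hji : j.IsIntegral := by
    have h1 : (j.comp (Ideal.Quotient.mk (RingHom.ker g))).IsIntegral := by
      have : j.comp (Ideal.Quotient.mk (RingHom.ker g))
          = (Ideal.Quotient.mk Q).comp (algebraMap A B) := by ext a; rfl
      rw [this]
      exact RingHom.IsIntegral.trans _ _ (algebraMap_isIntegral_iff.2 inferInstance)
        (RingHom.isIntegral_of_surjective _ Ideal.Quotient.mk_surjective)
    exact RingHom.IsIntegral.tower_top _ _ h1
  let : Algebra (A ⧸ RingHom.ker g) (B ⧸ Q) := j.toAlgebra
  let : Algebra (A ⧸ RingHom.ker g) M := (RingHom.kerLift g).toAlgebra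
  have : Algebra.IsIntegral (A ⧸ RingHom.ker g) (B ⧸ Q) := ⟨hji⟩
  have : Module.IsTorsionFree (A ⧸ RingHom.ker g) (B ⧸ Q) :=
    Module.isTorsionFree_iff_algebraMap_injective.2 hj
  have : Module.IsTorsionFree (A ⧸ RingHom.ker g) M :=
    Module.isTorsionFree_iff_algebraMap_injective.2 (RingHom.kerLift_injective g)
  let l : (B ⧸ Q) →ₐ[A ⧸ RingHom.ker g] M := IsAlgClosed.lift
  refine ⟨l.toRingHom.comp (Ideal.Quotient.mk Q), fun a => ?_⟩
  have := l.commutes (Ideal.Quotient.mk _ a)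
  exact this

lemma aux_spec {K Kbar Ω : Type*} [Field K] [Field Kbar] [Algebra K Kbar]
    [Field Ω] [Algebra K[X] Ω] (hinj : Function.Injective (algebraMap K[X] Ω))
    (f : K[X]) (hsep : f.Separable) (q ρ : Polynomial Ω)
    (hdec : (f.map ((algebraMap K[X] Ω).comp C)).comp (X + C (algebraMap K[X] Ω X)) = q ^ 2 + ρ)
    (hdegq : 2 * q.natDegree ≤ f.natDegree + 1)
    (hodd : ∀ i : ℕ, Even i → ρ.coeff i = 0)
    (α : Kbar) (ψ : integralClosure K[X] Ω →+* Kbar)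
    (hψ : ∀ a, ψ (algebraMap K[X] _ a) = aeval α a)
    (hr : ∀ h : IsIntegral K[X] (ρ.coeff 1), ψ ⟨ρ.coeff 1, h⟩ = 0) :
    aeval α f ≠ 0 ∧
        ∃ q ρ : Polynomial Kbar,
          (f.map (algebraMap K Kbar)).comp (X + C α) = q ^ 2 + ρ ∧
          2 * q.natDegree ≤ ((f.map (algebraMap K Kbar)).comp (X + C α)).natDegree + 1 ∧
          (∀ i : ℕ, Even i → ρ.coeff i = 0) ∧
          ρ.coeff 1 = 0 := by
  let ι : (integralClosure K[X] Ω) →+* Ω := algebraMap (integralClosure K[X] Ω) Ω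
  have hι : Function.Injective ι := Subtype.val_injective
  let h : Polynomial (integralClosure K[X] Ω) := (f.map ((algebraMap K[X] (integralClosure K[X] Ω)).comp C)).comp (X + C (algebraMap K[X] (integralClosure K[X] Ω) X))
  have hh : h.map ι = q ^ 2 + ρ := by
    rw [← hdec]
    simp only [h, Polynomial.map_comp, Polynomial.map_map, Polynomial.map_add, map_X, map_C]
    rfl
  have hq : ∀ i, IsIntegral K[X] (q.coeff i) := by
    apply aux_int
    intro i hi
    have : (q ^ 2).coeff i = ι (h.coeff i) := by
      rw [← coeff_map, hh, coeff_add, hodd i hi, add_zero]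
    rw [this]
    exact (h.coeff i).2
  obtain ⟨qB, hqB⟩ : ∃ qB : Polynomial (integralClosure K[X] Ω), qB.map ι = q := by
    rw [← Polynomial.mem_lifts, Polynomial.lifts_iff_coeff_lifts]
    exact fun i => ⟨⟨_, hq i⟩, rfl⟩
  have hρB : (h - qB ^ 2).map ι = ρ := by
    rw [Polynomial.map_sub, hh, Polynomial.map_pow, hqB]; ring
  have hco : ∀ i, ι ((h - qB ^ 2).coeff i) = ρ.coeff i := fun i => by rw [← coeff_map, hρB]
  have hψh : h.map ψ = (f.map (algebraMap K Kbar)).comp (X + C α) := by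
    have e1 : ψ.comp ((algebraMap K[X] (integralClosure K[X] Ω)).comp C) = algebraMap K Kbar := by
      ext a
      simp [hψ]
    simp only [h, Polynomial.map_comp, Polynomial.map_map, Polynomial.map_add, map_X, map_C, hψ,
      aeval_X, e1]
  have hdec' : (f.map (algebraMap K Kbar)).comp (X + C α)
      = (qB.map ψ) ^ 2 + (h - qB ^ 2).map ψ := by
    rw [← hψh]; simp
  have hodd' : ∀ i : ℕ, Even i → ((h - qB ^ 2).map ψ).coeff i = 0 := by
    intro i hi
    rw [coeff_map, hι (a₁ := (h - qB ^ 2).coeff i) (a₂ := 0) (by rw [hco, hodd i hi, map_zero]),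
      map_zero]
  have h1 : ((h - qB ^ 2).map ψ).coeff 1 = 0 := by
    rw [coeff_map]
    have hint : IsIntegral K[X] (ρ.coeff 1) := by
      rw [← hco]; exact ((h - qB ^ 2).coeff 1).2
    rw [← hr hint]
    congr 1
    exact Subtype.ext (hco 1)
  refine ⟨fun h0 => ?_, qB.map ψ, (h - qB ^ 2).map ψ, hdec', ?_, hodd', h1⟩
  · apply hsep.aeval_derivative_ne_zero h0
    have c0 := congrArg (eval 0) hdec'
    have c1 := congrArg (fun p => eval 0 (derivative p)) hdec'
    have r0 : eval 0 ((h - qB ^ 2).map ψ) = 0 := by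
      rw [← coeff_zero_eq_eval_zero]; exact hodd' 0 (by simp)
    have r1 : eval 0 (derivative ((h - qB ^ 2).map ψ)) = 0 := by
      rw [← coeff_zero_eq_eval_zero, coeff_derivative, h1, zero_mul]
    rw [eval_add, r0, eval_comp] at c0
    simp only [derivative_add, derivative_comp, derivative_pow, eval_add, r1] at c1
    have c0' : eval 0 (qB.map ψ) = 0 := by
      have : (eval 0 (qB.map ψ)) ^ 2 = 0 := by
        rw [eval_pow] at c0
        rw [← add_zero (eval 0 (qB.map ψ) ^ 2), ← c0]
        simpa [eval_map_algebraMap] using h0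
      exact pow_eq_zero_iff two_ne_zero |>.1 this
    rw [eval_mul, eval_mul, eval_mul, eval_pow, c0', eval_comp, derivative_map] at c1
    simpa [eval_map_algebraMap] using c1
  · rw [natDegree_comp, natDegree_X_add_C, mul_one, natDegree_map (algebraMap K Kbar)]
    have : (qB.map ψ).natDegree ≤ q.natDegree := by
      rw [← hqB, natDegree_map_eq_of_injective hι]; exact natDegree_map_le
    omega


/-- Let `K` have characteristic `0`, `K̄` an algebraic closure of `K`,
and `f ∈ K[x]` separable of degree `≥ 1`.  Fix a totally odd part-square decomposition
`f(z + T) = q_T² + ρ_T` over an algebraic closure `Ω` of `K(T)`, let `R₁` be the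
coefficient of `z` in `ρ_T`, `L` a finite Galois extension of `K(T)` (inside `Ω`)
containing `R₁`, and `F := ∏_{σ ∈ Gal(L/K(T))} σ R₁`.  Then `F` is (the image of) a
nonzero polynomial `P ∈ K[T]`, and every root `α ∈ K̄` of `P` satisfies `f(α) ≠ 0` and
admits a totally odd part-square decomposition of `f(z + α)` with vanishing linear
term of the remainder. -/
theorem stmt18 (K : Type*) [Field K] [CharZero K]
    (Kbar : Type*) [Field Kbar] [Algebra K Kbar] [IsAlgClosure K Kbar]
    (f : Polynomial K) (hsep : f.Separable) (hdeg : 1 ≤ f.natDegree)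
    (Ω : Type*) [Field Ω] [Algebra (RatFunc K) Ω] [IsAlgClosure (RatFunc K) Ω]
    (φ : Polynomial K →+* Ω)
    (hφ : φ = (algebraMap (RatFunc K) Ω).comp (algebraMap (Polynomial K) (RatFunc K)))
    (qT ρT : Polynomial Ω)
    (hdec : (f.map (φ.comp Polynomial.C)).comp (X + C (φ Polynomial.X)) = qT ^ 2 + ρT)
    (hdegq : 2 * qT.natDegree ≤
      ((f.map (φ.comp Polynomial.C)).comp (X + C (φ Polynomial.X))).natDegree + 1)
    (hodd : ∀ i : ℕ, Even i → ρT.coeff i = 0)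
    (L : IntermediateField (RatFunc K) Ω)
    [FiniteDimensional (RatFunc K) L] [IsGalois (RatFunc K) L]
    (hR₁ : ρT.coeff 1 ∈ L) :
    ∃ P : Polynomial K, P ≠ 0 ∧
      φ P = (((∏ᶠ σ : L ≃ₐ[RatFunc K] L, σ (⟨ρT.coeff 1, hR₁⟩ : L)) : L) : Ω) ∧
      ∀ α : Kbar, Polynomial.aeval α P = 0 →
        Polynomial.aeval α f ≠ 0 ∧
        ∃ q ρ : Polynomial Kbar,
          (f.map (algebraMap K Kbar)).comp (X + C α) = q ^ 2 + ρ ∧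
          2 * q.natDegree ≤ ((f.map (algebraMap K Kbar)).comp (X + C α)).natDegree + 1 ∧
          (∀ i : ℕ, Even i → ρ.coeff i = 0) ∧
          ρ.coeff 1 = 0 := by
  let : Algebra K[X] Ω := φ.toAlgebra
  have hal : ∀ x, algebraMap K[X] Ω x = φ x := fun _ => rfl
  have : IsScalarTower K[X] (RatFunc K) Ω := IsScalarTower.of_algebraMap_eq (fun x => by
    rw [hal, hφ]; rfl)
  have : IsAlgClosed Ω := IsAlgClosure.isAlgClosed (RatFunc K)
  have : Algebra.IsAlgebraic (RatFunc K) Ω := IsAlgClosure.isAlgebraic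
  have : Normal (RatFunc K) Ω := IsAlgClosure.normal _ _
  have : IsAlgClosed Kbar := IsAlgClosure.isAlgClosed K
  have hinj : Function.Injective (algebraMap K[X] Ω) := by
    rw [IsScalarTower.algebraMap_eq K[X] (RatFunc K) Ω]
    exact (algebraMap (RatFunc K) Ω).injective.comp (IsFractionRing.injective K[X] (RatFunc K))
  have hinjB : Function.Injective (algebraMap K[X] (integralClosure K[X] Ω)) :=
    fun x y hxy => hinj (congrArg Subtype.val hxy)
  have hdegq' : 2 * qT.natDegree ≤ f.natDegree + 1 := by
    rwa [natDegree_comp, natDegree_X_add_C, mul_one, natDegree_map] at hdegq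
  -- integrality of the linear coefficient
  have hintR : IsIntegral K[X] (ρT.coeff 1) := by
    have hcoef : ∀ i, IsIntegral K[X] ((qT ^ 2 + ρT).coeff i) := by
      intro i
      have : (qT ^ 2 + ρT) = ((f.map (Polynomial.C : K →+* K[X])).comp (X + C X)).map
          (algebraMap K[X] Ω) := by
        rw [← hdec]
        simp only [Polynomial.map_comp, Polynomial.map_map, Polynomial.map_add, map_X, map_C]
        rfl
      rw [this, coeff_map]
      exact isIntegral_algebraMap
    have hq : ∀ i, IsIntegral K[X] (qT.coeff i) := by
      apply aux_int
      intro i hi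
      have := hcoef i
      rwa [coeff_add, hodd i hi, add_zero] at this
    have h2 : IsIntegral K[X] ((qT ^ 2).coeff 1) := by
      rw [pow_two, coeff_mul]
      exact IsIntegral.sum _ fun x _ => (hq _).mul (hq _)
    have := (hcoef 1).sub h2
    rwa [coeff_add, add_sub_cancel_left] at this
  have hintL : IsIntegral K[X] (⟨ρT.coeff 1, hR₁⟩ : L) := by
    have hi : Function.Injective (algebraMap L Ω) := Subtype.val_injective
    have : IsScalarTower K[X] L Ω := IsScalarTower.of_algebraMap_eq fun x => rfl
    rw [← isIntegral_algebraMap_iff hi]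
    exact hintR
  obtain ⟨P, hP⟩ := IsIntegrallyClosed.isIntegral_iff.1
    (Algebra.isIntegral_norm (RatFunc K) hintL)
  have hPprod : φ P = (((∏ᶠ σ : L ≃ₐ[RatFunc K] L, σ (⟨ρT.coeff 1, hR₁⟩ : L)) : L) : Ω) := by
    rw [finprod_eq_prod_of_fintype, ← Algebra.norm_eq_prod_automorphisms, ← hP, hφ]
    rfl
  have hmain : ∀ α : Kbar, Polynomial.aeval α P = 0 →
        Polynomial.aeval α f ≠ 0 ∧
        ∃ q ρ : Polynomial Kbar,
          (f.map (algebraMap K Kbar)).comp (X + C α) = q ^ 2 + ρ ∧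
          2 * q.natDegree ≤ ((f.map (algebraMap K Kbar)).comp (X + C α)).natDegree + 1 ∧
          (∀ i : ℕ, Even i → ρ.coeff i = 0) ∧
          ρ.coeff 1 = 0 := by
    intro α hα
    obtain ⟨ψ, hψ⟩ := aux_ext (B := integralClosure K[X] Ω) (aeval α : K[X] →ₐ[K] Kbar).toRingHom
      hinjB
    have hτint : ∀ σ : L ≃ₐ[RatFunc K] L,
        IsIntegral K[X] ((σ.liftNormal Ω) (ρT.coeff 1)) := fun σ =>
      hintR.map ((σ.liftNormal Ω).toAlgHom.restrictScalars K[X])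
    have hprod : algebraMap K[X] (integralClosure K[X] Ω) P
        = ∏ σ : L ≃ₐ[RatFunc K] L, (⟨_, hτint σ⟩ : integralClosure K[X] Ω) := by
      apply Subtype.ext
      rw [finprod_eq_prod_of_fintype] at hPprod
      rw [SubmonoidClass.coe_finsetProd]
      refine Eq.trans hPprod ?_
      refine Eq.trans (map_prod (algebraMap L Ω) _ _) ?_
      refine Finset.prod_congr rfl fun σ _ => ?_
      exact (σ.liftNormal_commutes Ω (⟨ρT.coeff 1, hR₁⟩ : L)).symm
    have hz : ψ (algebraMap K[X] (integralClosure K[X] Ω) P) = 0 := by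
      rw [hψ]; exact hα
    rw [hprod, map_prod, Finset.prod_eq_zero_iff] at hz
    obtain ⟨σ, -, hσ⟩ := hz
    let τ : Ω →+* Ω := (σ.liftNormal Ω : Ω →+* Ω)
    have hτ : ∀ x, τ (φ x) = φ x := by
      intro x
      rw [hφ]
      exact (σ.liftNormal Ω).commutes _
    refine aux_spec hinj f hsep (qT.map τ) (ρT.map τ) ?_ ?_ ?_ α ψ hψ ?_
    · rw [← Polynomial.map_pow, ← Polynomial.map_add, ← hdec]
      have e1 : τ.comp (φ.comp C) = φ.comp C := by
        ext a; exact hτ _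
      simp only [Polynomial.map_comp, Polynomial.map_map, Polynomial.map_add, map_X, map_C, e1, hτ]
      rfl
    · rwa [natDegree_map]
    · intro i hi
      rw [coeff_map, hodd i hi, map_zero]
    · intro h
      rw [← hσ]
      congr 1
      exact Subtype.ext (coeff_map _ _)
  refine ⟨P, ?_, hPprod, hmain⟩
  rintro rfl
  obtain ⟨α, hα⟩ := IsAlgClosed.exists_aeval_eq_zero Kbar f
    (by intro h; exact absurd hdeg (by rw [natDegree_eq_zero_iff_degree_le_zero.2 h.le]; simp))
  exact (hmain α (map_zero _)).1 hα
end
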